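/- Suppose Assumption (Coefficients) holds, that g ∈ C(ℝⁿ) is bounded, that c, f, φ ∈ C([0,T] × ℝⁿ) with c bounded, that the compatibility condition g(x) ≥ φ(T,x) holds for all x ∈ ℝⁿ, and that lim_{y→0} F(x,y) = 0 for every x ∈ ℝⁿ. If u is a bounded viscosity subsolution and v is a bounded viscosity supersolution of the evolution obstacle problem min{−w_t − Lw + c w − f, w − φ} = 0 on [0,T) × ℝⁿ with final condition w(T,·) = g, then u(t,x) ≤ v(t,x) for all (t,x) ∈ [0,T] × ℝⁿ. -/

import Mathlib

/-!
The proof doubles the variables and uses `q(z) = √(1 + |z|²) − 1` for every penalty, since `q` and its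
translates are admissible test functions and `q` dominates, up to a constant, every Taylor remainder
`A(x + z) − A(x) − ∇A(x)·z` of a function with two bounded derivatives.

*Jump form.* At a touching point the test function inside the nonlocal term can be replaced by the
solution itself (`jump_form`): the solution at the touching time is a pointwise limit of smooth
functions lying above it (`exists_upper_approx`), and a reverse Fatou argument passes to the limit.

*Doubling.* Let `κ > 0` be least with `u − v ≤ κ E(t)`, where `E` decreases faster than the bound on
`c` requires (`exists_time_weight`). At a maximum of
`u(t,x) − v(s,y) − κ E(t) − j q(x − y) − j q(t − s) − β q(x)` subtraction of the two viscosity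
inequalities (`doubling_inequality`) bounds `−κ E'(t) + c (u − v)` by a multiple of the penalty
`j q(x − y)` plus `O(β)` plus a multiple of `β q(x)`. The penalty vanishes as `j → ∞`
(`exists_doubling_sequence`), the remaining terms are small compared with `κ E`, and the left side is
at least `κ E`, a contradiction. The jump part of the estimate rests on
`q(x + z) − q(x) − ∇q(x)·z ≤ |z|² / (2 √(1 + |x|²))` and the `L²` Lipschitz bound on `F`.

*Integrability.* The ball in the bound by `ρ` being open, `F(x, ·)` need not be square integrable
for `ν`. By the `L²` Lipschitz bound `q ∘ F(x, ·)` is integrable either for every `x` or for none. In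
the first case the argument above applies. In the second case adding `±q(x − x₀)` to a test function
touching at `x₀` shows that a test function with divergent nonlocal term, hence with Bochner integral
`0`, is always available, so `u` and `v` are a sub- and a supersolution of the equation with jump
measure `0`, and the first case applies to that equation.
-/

open MeasureTheory
open scoped RealInnerProductSpace ENNReal

noncomputable section

/-- `ℝⁿ` with the Euclidean inner product and norm. -/
abbrev En (n : ℕ) := EuclideanSpace ℝ (Fin n)

/-- Test functions for the evolution problem: jointly continuous, `C¹` in `t` and `C²` in `x`,
with bounded derivatives. -/
def IsTestFnEvol {n : ℕ} (u : ℝ → En n → ℝ) : Prop :=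
  Continuous (fun p : ℝ × En n => u p.1 p.2) ∧
  (∀ x, Differentiable ℝ (fun t => u t x)) ∧
  (∃ M, ∀ t x, |deriv (fun s => u s x) t| ≤ M) ∧
  (∀ t, ContDiff ℝ 2 (u t)) ∧
  (∃ M, ∀ t x, ‖fderiv ℝ (u t) x‖ ≤ M) ∧
  (∃ M, ∀ t x, ‖fderiv ℝ (fderiv ℝ (u t)) x‖ ≤ M)

/-- The nonlocal operator acting in the spatial variable:
`Lu(t,x) = b(x)·∇ₓu(t,x) + ∫_{ℝⁿ\{0}} (u(t, x + F(x,y)) − u(t,x) − ∇ₓu(t,x)·F(x,y)) ν(dy)`. -/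
def LopEvol {n : ℕ} (ν : Measure (En n)) (F : En n → En n → En n) (b : En n → En n)
    (u : ℝ → En n → ℝ) (t : ℝ) (x : En n) : ℝ :=
  ⟪b x, gradient (u t) x⟫ +
    ∫ y in {(0 : En n)}ᶜ, (u t (x + F x y) - u t x - ⟪gradient (u t) x, F x y⟫) ∂ν

/-- Assumption (Coefficients): there are `K > 0` and a measurable `ρ : ℝⁿ → [0,∞)` such that
(i) `∫ |F(x₁,y) − F(x₂,y)|² ν(dy) ≤ K|x₁ − x₂|²`;
(ii) `sup_{z ∈ B(0,|y|)} |F(x,z)| ≤ ρ(y)` and `∫ (max(|y|, ρ(y)))² ν(dy) ≤ K`;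
(iii) `b` is bounded and Lipschitz. -/
def CoefficientsAssumption {n : ℕ} (ν : Measure (En n)) (F : En n → En n → En n)
    (b : En n → En n) (ρ : En n → ℝ) (K : ℝ) : Prop :=
  0 < K ∧
  Measurable (Function.uncurry F) ∧ Measurable ρ ∧ (∀ y, 0 ≤ ρ y) ∧
  (∀ x₁ x₂ : En n,
    ∫⁻ y in {(0 : En n)}ᶜ, ENNReal.ofReal (‖F x₁ y - F x₂ y‖ ^ 2) ∂ν
      ≤ ENNReal.ofReal (K * ‖x₁ - x₂‖ ^ 2)) ∧
  (∀ x y : En n, ∀ z ∈ Metric.ball (0 : En n) ‖y‖, ‖F x z‖ ≤ ρ y) ∧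
  (∫⁻ y in {(0 : En n)}ᶜ, ENNReal.ofReal ((max ‖y‖ (ρ y)) ^ 2) ∂ν ≤ ENNReal.ofReal K) ∧
  (∃ M, ∀ x, ‖b x‖ ≤ M) ∧ (∃ β : NNReal, LipschitzWith β b)

/-- A bounded, continuous (on `[0,T] × ℝⁿ`) function `v` is a viscosity subsolution of the
evolution obstacle problem `min{−v_t − Lv + c v − f, v − φ} = 0` on `[0,T) × ℝⁿ` with final
condition `v(T,·) = g`. -/
def IsEvolSubsolution {n : ℕ} (T : ℝ) (ν : Measure (En n)) (F : En n → En n → En n)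
    (b : En n → En n) (c f φ : ℝ → En n → ℝ) (g : En n → ℝ) (v : ℝ → En n → ℝ) : Prop :=
  ContinuousOn (fun p : ℝ × En n => v p.1 p.2) (Set.Icc 0 T ×ˢ Set.univ) ∧
  (∃ M, ∀ t ∈ Set.Icc (0 : ℝ) T, ∀ x, |v t x| ≤ M) ∧
  (∀ x, v T x ≤ g x) ∧
  ∀ u : ℝ → En n → ℝ, IsTestFnEvol u → ∀ t₀ ∈ Set.Ico (0 : ℝ) T, ∀ x₀ : En n,
    (∀ t ∈ Set.Icc (0 : ℝ) T, ∀ x, v t x - u t x ≤ v t₀ x₀ - u t₀ x₀) → u t₀ x₀ = v t₀ x₀ →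
    min (-(deriv (fun s => u s x₀) t₀) - LopEvol ν F b u t₀ x₀
          + c t₀ x₀ * u t₀ x₀ - f t₀ x₀)
        (u t₀ x₀ - φ t₀ x₀) ≤ 0

/-- A bounded, continuous (on `[0,T] × ℝⁿ`) function `v` is a viscosity supersolution of the
evolution obstacle problem `min{−v_t − Lv + c v − f, v − φ} = 0` on `[0,T) × ℝⁿ` with final
condition `v(T,·) = g`. -/
def IsEvolSupersolution {n : ℕ} (T : ℝ) (ν : Measure (En n)) (F : En n → En n → En n)
    (b : En n → En n) (c f φ : ℝ → En n → ℝ) (g : En n → ℝ) (v : ℝ → En n → ℝ) : Prop :=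
  ContinuousOn (fun p : ℝ × En n => v p.1 p.2) (Set.Icc 0 T ×ˢ Set.univ) ∧
  (∃ M, ∀ t ∈ Set.Icc (0 : ℝ) T, ∀ x, |v t x| ≤ M) ∧
  (∀ x, g x ≤ v T x) ∧
  ∀ u : ℝ → En n → ℝ, IsTestFnEvol u → ∀ t₀ ∈ Set.Ico (0 : ℝ) T, ∀ x₀ : En n,
    (∀ t ∈ Set.Icc (0 : ℝ) T, ∀ x, v t₀ x₀ - u t₀ x₀ ≤ v t x - u t x) → u t₀ x₀ = v t₀ x₀ →
    0 ≤ min (-(deriv (fun s => u s x₀) t₀) - LopEvol ν F b u t₀ x₀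
          + c t₀ x₀ * u t₀ x₀ - f t₀ x₀)
        (u t₀ x₀ - φ t₀ x₀)


open Filter Topology

/-! ### The regularised norm -/

section RegularisedNorm

variable {E : Type*} [NormedAddCommGroup E]

/-- `√(1 + |z|²)`, the smooth substitute for `|z|`. -/
def jb (z : E) : ℝ := √(1 + ‖z‖ ^ 2)

/-- `q(z) = √(1 + |z|²) − 1`: comparable to `|z|²` near the origin and to `|z|` near infinity, with
bounded derivatives of order one and two. It serves as penalty in space, in time and at infinity. -/
def qf (z : E) : ℝ := jb z - 1

lemma jb_sq (z : E) : jb z ^ 2 = 1 + ‖z‖ ^ 2 := Real.sq_sqrt (by positivity)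

lemma one_le_jb (z : E) : 1 ≤ jb z := by
  rw [jb, Real.one_le_sqrt]; nlinarith [sq_nonneg ‖z‖]

lemma jb_pos (z : E) : 0 < jb z := lt_of_lt_of_le one_pos (one_le_jb z)

lemma norm_le_jb (z : E) : ‖z‖ ≤ jb z :=
  Real.le_sqrt_of_sq_le (by linarith)

lemma qf_nonneg (z : E) : 0 ≤ qf z := by
  have := one_le_jb z; unfold qf; linarith

lemma qf_zero : qf (0 : E) = 0 := by simp [qf, jb]

lemma qf_neg (z : E) : qf (-z) = qf z := by simp [qf, jb]

lemma continuous_jb : Continuous (jb : E → ℝ) := by unfold jb; fun_prop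

lemma continuous_qf : Continuous (qf : E → ℝ) := by
  unfold qf; exact continuous_jb.sub continuous_const

lemma norm_sub_one_le_qf (z : E) : ‖z‖ - 1 ≤ qf z := by
  have := norm_le_jb z; unfold qf; linarith

lemma qf_eq_zero {z : E} (h : qf z = 0) : z = 0 := by
  have h1 : jb z = 1 := by unfold qf at h; linarith
  have h2 := jb_sq z
  rw [h1] at h2
  have : ‖z‖ = 0 := by nlinarith [norm_nonneg z]
  simpa using this

lemma qf_mono {E' : Type*} [NormedAddCommGroup E'] {z : E} {w : E'} (h : ‖z‖ ≤ ‖w‖) : qf z ≤ qf w := by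
  unfold qf jb
  gcongr

lemma qf_le_sq (z : E) : qf z ≤ ‖z‖ ^ 2 / 2 := by
  have h1 := jb_sq z
  unfold qf
  nlinarith [sq_nonneg (jb z - 1)]

lemma sq_le_qf {z : E} (h : ‖z‖ ≤ 1) : ‖z‖ ^ 2 ≤ 3 * qf z := by
  have h1 := jb_sq z
  have h3 : jb z ≤ 2 := by nlinarith [norm_nonneg z, one_le_jb z]
  unfold qf
  nlinarith [one_le_jb z]

lemma norm_le_qf {z : E} (h : 1 ≤ ‖z‖) : ‖z‖ ≤ 3 * qf z := by
  have h1 := jb_sq z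
  have h2 := one_le_jb z
  have h3 := norm_le_jb z
  unfold qf
  nlinarith

lemma sq_div_jb_le (z : E) : ‖z‖ ^ 2 / jb z ≤ 2 * qf z := by
  have h1 := jb_sq z
  have h2 := one_le_jb z
  rw [div_le_iff₀ (jb_pos z)]
  unfold qf
  nlinarith

lemma abs_jb_sub_le (a b : E) : |jb a - jb b| ≤ ‖a - b‖ := by
  have h1 := jb_sq a
  have h2 := jb_sq b
  have h3 := norm_le_jb a
  have h4 := norm_le_jb b
  have h5 := abs_norm_sub_norm_le a b
  have hp : 0 < jb a + jb b := add_pos (jb_pos a) (jb_pos b)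
  have h6 : (jb a - jb b) * (jb a + jb b) = (‖a‖ - ‖b‖) * (‖a‖ + ‖b‖) := by
    ring_nf; nlinarith
  have h7 : |jb a - jb b| * (jb a + jb b) = |‖a‖ - ‖b‖| * (‖a‖ + ‖b‖) := by
    rw [← abs_of_pos hp, ← abs_mul, h6, abs_mul,
      abs_of_nonneg (add_nonneg (norm_nonneg a) (norm_nonneg b))]
  have h8 : |jb a - jb b| * (jb a + jb b) ≤ ‖a - b‖ * (jb a + jb b) := by
    rw [h7]
    exact mul_le_mul h5 (by linarith) (by positivity) (norm_nonneg _)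
  exact le_of_mul_le_mul_right h8 hp

variable [InnerProductSpace ℝ E]

lemma qf_two_smul_le (z : E) : qf ((2 : ℝ) • z) ≤ 4 * qf z := by
  have h1 := jb_sq z
  have h2 := jb_sq ((2 : ℝ) • z)
  have h3 := one_le_jb z
  rw [norm_smul] at h2
  norm_num at h2
  have : jb ((2 : ℝ) • z) ≤ 4 * jb z - 3 := by
    refine abs_le_of_sq_le_sq' ?_ (by linarith) |>.2
    nlinarith [sq_nonneg (jb z - 1)]
  unfold qf
  linarith

/-- The gradient of `q`. -/
def qgrad (z : E) : E := (jb z)⁻¹ • z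

lemma norm_qgrad_le (z : E) : ‖qgrad z‖ ≤ 1 := by
  rw [qgrad, norm_smul, norm_inv, Real.norm_of_nonneg (jb_pos z).le, inv_mul_le_iff₀ (jb_pos z)]
  linarith [norm_le_jb z]

lemma qgrad_neg (z : E) : qgrad (-z) = -qgrad z := by simp [qgrad, jb]

lemma qgrad_zero : qgrad (0 : E) = 0 := by simp [qgrad]

lemma norm_qgrad_sub_le (a b : E) : ‖qgrad a - qgrad b‖ ≤ 2 * ‖a - b‖ := by
  have ha := jb_pos a
  have hb := jb_pos b
  have e : qgrad a - qgrad b = (jb a)⁻¹ • (a - b) + ((jb b - jb a) / jb a) • qgrad b := by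
    unfold qgrad
    rw [smul_smul, smul_sub, sub_add, ← sub_smul]
    congr 2
    field_simp
    ring
  have h1 : ‖(jb a)⁻¹ • (a - b)‖ ≤ ‖a - b‖ := by
    rw [norm_smul, norm_inv, Real.norm_of_nonneg ha.le, inv_mul_le_iff₀ ha]
    nlinarith [one_le_jb a, norm_nonneg (a - b)]
  have h2 : ‖((jb b - jb a) / jb a) • qgrad b‖ ≤ ‖a - b‖ := by
    rw [norm_smul, norm_div, Real.norm_of_nonneg ha.le, Real.norm_eq_abs, abs_sub_comm]
    have h3 : |jb a - jb b| / jb a ≤ ‖a - b‖ := by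
      rw [div_le_iff₀ ha]
      nlinarith [one_le_jb a, norm_nonneg (a - b), abs_jb_sub_le a b]
    calc _ ≤ ‖a - b‖ * 1 :=
          mul_le_mul h3 (norm_qgrad_le b) (norm_nonneg _) (norm_nonneg _)
      _ = _ := mul_one _
  rw [e]
  exact (norm_add_le _ _).trans (by linarith)

/-- Second-order upper bound for `q`, with the gain `1/√(1 + |x|²)` at infinity. -/
lemma qf_taylor_le (x z : E) :
    qf (x + z) - qf x - ⟪qgrad x, z⟫ ≤ ‖z‖ ^ 2 / (2 * jb x) := by
  have h1 := jb_sq x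
  have h2 := jb_sq (x + z)
  rw [norm_add_sq_real] at h2
  have hp := jb_pos x
  have e : ⟪qgrad x, z⟫ = ⟪x, z⟫ / jb x := by
    rw [qgrad, real_inner_smul_left]; ring
  rw [e, le_div_iff₀ (by positivity)]
  have : (qf (x + z) - qf x - ⟪x, z⟫ / jb x) * (2 * jb x)
      = 2 * jb (x + z) * jb x - 2 * jb x ^ 2 - 2 * ⟪x, z⟫ := by
    unfold qf; field_simp; ring
  rw [this]
  nlinarith [sq_nonneg (jb (x + z) - jb x)]

lemma one_add_inner_le (c d : E) : 1 + ⟪c, d⟫ ≤ jb c * jb d := by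
  have h1 := jb_sq c
  have h2 := jb_sq d
  refine le_trans (add_le_add_right (real_inner_le_norm c d) 1) ?_
  refine abs_le_of_sq_le_sq' ?_ (mul_pos (jb_pos c) (jb_pos d)).le |>.2
  rw [mul_pow, h1, h2]
  nlinarith [sq_nonneg (‖c‖ - ‖d‖)]

/-- Midpoint convexity of `q`. -/
lemma qf_midpoint (x a b : E) :
    qf (x + (a + b)) ≤ (qf (x + (2 : ℝ) • a) + qf (x + (2 : ℝ) • b)) / 2 := by
  have h1 := one_add_inner_le (x + (2 : ℝ) • a) (x + (a + b))
  have h2 := one_add_inner_le (x + (2 : ℝ) • b) (x + (a + b))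
  have h3 := jb_sq (x + (a + b))
  have hp := jb_pos (x + (a + b))
  have e : ⟪x + (2 : ℝ) • a, x + (a + b)⟫ + ⟪x + (2 : ℝ) • b, x + (a + b)⟫
      = 2 * ‖x + (a + b)‖ ^ 2 := by
    rw [← inner_add_left, ← real_inner_self_eq_norm_sq, ← real_inner_smul_left]
    congr 1
    module
  have : 2 * jb (x + (a + b)) * jb (x + (a + b))
      ≤ (jb (x + (2 : ℝ) • a) + jb (x + (2 : ℝ) • b)) * jb (x + (a + b)) := by nlinarith
  have := le_of_mul_le_mul_right this hp
  unfold qf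
  linarith

lemma qf_add_le (a b : E) : qf (a + b) ≤ 2 * qf a + ‖b‖ ^ 2 := by
  have h := qf_midpoint 0 a b
  simp only [zero_add] at h
  have h1 := qf_two_smul_le a
  have h2 := qf_le_sq ((2 : ℝ) • b)
  rw [norm_smul] at h2
  norm_num at h2
  nlinarith

lemma hasFDerivAt_qf (z : E) : HasFDerivAt (qf : E → ℝ) (innerSL ℝ (qgrad z)) z := by
  have h : HasFDerivAt (fun z : E => 1 + ‖z‖ ^ 2) (2 • innerSL ℝ z) z :=
    (HasStrictFDerivAt.hasFDerivAt (hasStrictFDerivAt_norm_sq z)).const_add 1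
  have h2 := (h.sqrt (by positivity)).sub_const 1
  refine HasFDerivAt.congr_fderiv h2 ?_
  ext y
  have := jb_pos z
  simp only [qgrad, map_smul]
  change (1 / (2 * jb z)) • ((2 • innerSL ℝ z) y) = _
  simp
  field_simp

lemma contDiff_qf : ContDiff ℝ 2 (qf : E → ℝ) := by
  unfold qf jb
  refine ContDiff.sub (ContDiff.sqrt (contDiff_const.add (contDiff_norm_sq ℝ)) fun x => by positivity) contDiff_const

end RegularisedNorm

/-! ### Spatial functions with two bounded derivatives -/

/-- `C²` functions on `ℝⁿ` with bounded first and second derivatives. -/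
def BD2 {n : ℕ} (A : En n → ℝ) : Prop :=
  ContDiff ℝ 2 A ∧ (∃ M, ∀ x, ‖fderiv ℝ A x‖ ≤ M) ∧ (∃ M, ∀ x, ‖fderiv ℝ (fderiv ℝ A) x‖ ≤ M)

/-- Differentiable functions of time with bounded derivative. -/
def BD1 (B : ℝ → ℝ) : Prop :=
  Differentiable ℝ B ∧ ∃ M, ∀ t, |deriv B t| ≤ M

namespace BD2

set_option maxSynthPendingDepth 3

variable {n : ℕ} {A A' : En n → ℝ}

lemma differentiable (h : BD2 A) : Differentiable ℝ A := h.1.differentiable (by norm_num)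

lemma differentiable_fderiv (h : BD2 A) : Differentiable ℝ (fderiv ℝ A) :=
  (h.1.fderiv_right (m := 1) (by norm_num)).differentiable (by norm_num)

lemma add (h : BD2 A) (h' : BD2 A') : BD2 (fun x => A x + A' x) := by
  have e : fderiv ℝ (fun x => A x + A' x) = fun x => fderiv ℝ A x + fderiv ℝ A' x := by
    funext x; exact fderiv_fun_add (h.differentiable x) (h'.differentiable x)
  obtain ⟨M, hM⟩ := h.2.1
  obtain ⟨M', hM'⟩ := h'.2.1
  obtain ⟨N, hN⟩ := h.2.2
  obtain ⟨N', hN'⟩ := h'.2.2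
  refine ⟨h.1.add h'.1, ⟨M + M', fun x => ?_⟩, ⟨N + N', fun x => ?_⟩⟩
  · rw [e]; exact (norm_add_le _ _).trans (add_le_add (hM x) (hM' x))
  · rw [e, fderiv_fun_add (h.differentiable_fderiv x) (h'.differentiable_fderiv x)]
    exact (norm_add_le _ _).trans (add_le_add (hN x) (hN' x))

lemma const_mul (h : BD2 A) (r : ℝ) : BD2 (fun x => r * A x) := by
  have e : fderiv ℝ (fun x => r * A x) = fun x => r • fderiv ℝ A x := by
    funext x; exact fderiv_const_mul (h.differentiable x) r
  obtain ⟨M, hM⟩ := h.2.1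
  obtain ⟨N, hN⟩ := h.2.2
  refine ⟨contDiff_const.mul h.1, ⟨|r| * M, fun x => ?_⟩, ⟨|r| * N, fun x => ?_⟩⟩
  · rw [e, norm_smul]; exact mul_le_mul_of_nonneg_left (hM x) (norm_nonneg _)
  · rw [e, fderiv_fun_const_smul (h.differentiable_fderiv x), norm_smul]
    exact mul_le_mul_of_nonneg_left (hN x) (norm_nonneg _)

lemma const (r : ℝ) : BD2 (fun _ : En n => r) := by
  have e : fderiv ℝ (fun _ : En n => r) = fun _ => 0 := by funext x; simp
  exact ⟨contDiff_const, ⟨0, fun x => by simp⟩, ⟨0, fun x => by rw [e]; simp⟩⟩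

lemma comp_sub (h : BD2 A) (a : En n) : BD2 (fun x => A (x - a)) := by
  have e : fderiv ℝ (fun x => A (x - a)) = fun x => fderiv ℝ A (x - a) := by
    funext x; exact fderiv_comp_sub (f := A) a
  obtain ⟨M, hM⟩ := h.2.1
  obtain ⟨N, hN⟩ := h.2.2
  refine ⟨h.1.comp (contDiff_id.sub contDiff_const), ⟨M, fun x => ?_⟩, ⟨N, fun x => ?_⟩⟩
  · rw [e]; exact hM _
  · rw [e, fderiv_comp_sub (f := fderiv ℝ A) a]; exact hN _

lemma of_hasCompactSupport (h : ContDiff ℝ 2 A) (hc : HasCompactSupport A) : BD2 A := by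
  refine ⟨h, ?_, ?_⟩
  · exact ((h.continuous_fderiv (by norm_num)).bounded_above_of_compact_support (hc.fderiv ℝ))
  · exact (((h.fderiv_right (m := 1) (by norm_num)).continuous_fderiv
      (by norm_num)).bounded_above_of_compact_support ((hc.fderiv ℝ).fderiv ℝ))

lemma qf : BD2 (qf : En n → ℝ) := by
  have e : fderiv ℝ (_root_.qf : En n → ℝ) = fun z => innerSL ℝ (qgrad z) := by
    funext z; exact (hasFDerivAt_qf z).fderiv
  refine ⟨contDiff_qf, ⟨1, fun x => ?_⟩, ⟨2, fun x => ?_⟩⟩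
  · rw [e]; simpa using norm_qgrad_le x
  · have hl : LipschitzWith 2 (fderiv ℝ (_root_.qf : En n → ℝ)) := by
      refine LipschitzWith.of_dist_le_mul fun a b => ?_
      rw [e, dist_eq_norm, dist_eq_norm, ← map_sub, innerSL_apply_norm]
      exact norm_qgrad_sub_le a b
    exact norm_fderiv_le_of_lipschitz ℝ hl

lemma fderiv_eq (x z : En n) : fderiv ℝ A x z = ⟪gradient A x, z⟫ := by
  rw [gradient, InnerProductSpace.toDual_symm_apply]

lemma exists_lip (h : BD2 A) : ∃ M, 0 ≤ M ∧ ∀ x z, |A (x + z) - A x| ≤ M * ‖z‖ := by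
  obtain ⟨M, hM⟩ := h.2.1
  refine ⟨M, (norm_nonneg _).trans (hM 0), fun x z => ?_⟩
  have := convex_univ.norm_image_sub_le_of_norm_fderiv_le
    (fun x _ => h.differentiable x) (fun x _ => hM x) (Set.mem_univ x) (Set.mem_univ (x + z))
  simpa using this

/-- The Taylor remainder of a `BD2` function is dominated by `q`, uniformly in the base point. -/
lemma taylor (h : BD2 A) :
    ∃ C, 0 ≤ C ∧ ∀ x z, |A (x + z) - A x - ⟪gradient A x, z⟫| ≤ C * _root_.qf z := by
  obtain ⟨M, hM0, hM⟩ := h.exists_lip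
  obtain ⟨M₁, hM₁⟩ := h.2.1
  obtain ⟨N, hN⟩ := h.2.2
  have hM₁0 : 0 ≤ M₁ := (norm_nonneg _).trans (hM₁ 0)
  have hN0 : 0 ≤ N := (norm_nonneg _).trans (hN 0)
  refine ⟨3 * (M + M₁ + N), by positivity, fun x z => ?_⟩
  rw [← fderiv_eq]
  have hq := qf_nonneg z
  rcases le_total ‖z‖ 1 with hz | hz
  · have h1 : ∀ w ∈ segment ℝ x (x + z), ‖fderiv ℝ A w - fderiv ℝ A x‖ ≤ N * ‖z‖ := by
      intro w hw
      have := convex_univ.norm_image_sub_le_of_norm_fderiv_le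
        (fun x _ => h.differentiable_fderiv x) (fun x _ => hN x) (Set.mem_univ x)
        (Set.mem_univ w)
      refine this.trans (mul_le_mul_of_nonneg_left ?_ hN0)
      have := norm_sub_le_of_mem_segment hw
      simpa using this
    have h2 := (convex_segment x (x + z)).norm_image_sub_le_of_norm_fderiv_le'
      (fun w _ => h.differentiable w) h1 (left_mem_segment ℝ x (x + z))
      (right_mem_segment ℝ x (x + z))
    rw [add_sub_cancel_left, Real.norm_eq_abs] at h2
    have := sq_le_qf hz
    refine h2.trans ?_
    nlinarith [mul_nonneg hM0 hq, mul_nonneg hM₁0 hq]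
  · have h1 := hM x z
    have h2 : |fderiv ℝ A x z| ≤ M₁ * ‖z‖ := by
      have := (fderiv ℝ A x).le_opNorm z
      rw [Real.norm_eq_abs] at this
      exact this.trans (mul_le_mul_of_nonneg_right (hM₁ x) (norm_nonneg _))
    have h3 := norm_le_qf hz
    refine (abs_sub _ _).trans ?_
    nlinarith [mul_nonneg hN0 hq]

lemma gradient_eq (x g : En n) (h : HasFDerivAt A (innerSL ℝ g) x) : gradient A x = g := by
  apply ext_inner_right ℝ
  intro z
  rw [← fderiv_eq, h.fderiv]; simp

end BD2


/-! ### Replacing the test function by the solution in the nonlocal term -/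

/-- Fatou's lemma for a sequence bounded above: a uniform lower bound on the integrals gives
integrability of the limit. -/
lemma reverse_fatou {α : Type*} [MeasurableSpace α] {μ : Measure α} {J : ℕ → α → ℝ}
    {J' G : α → ℝ} {a : ℝ} (hG : Integrable G μ) (hJ : ∀ k, Integrable (J k) μ)
    (hle : ∀ k y, J k y ≤ G y) (hlim : ∀ y, Tendsto (fun k => J k y) atTop (𝓝 (J' y)))
    (ha : ∀ k, a ≤ ∫ y, J k y ∂μ) : Integrable J' μ ∧ a ≤ ∫ y, J' y ∂μ := by
  have hm : AEStronglyMeasurable J' μ :=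
    aestronglyMeasurable_of_tendsto_ae atTop (fun k => (hJ k).1) (Eventually.of_forall hlim)
  have hle' : ∀ y, J' y ≤ G y := fun y => le_of_tendsto' (hlim y) fun k => hle k y
  have key : ∫⁻ y, ENNReal.ofReal (G y - J' y) ∂μ ≤ ENNReal.ofReal (∫ y, G y ∂μ - a) := by
    have h1 : ∀ k, ∫⁻ y, ENNReal.ofReal (G y - J k y) ∂μ ≤ ENNReal.ofReal (∫ y, G y ∂μ - a) := by
      intro k
      have hd : Integrable (fun y => G y - J k y) μ := hG.sub (hJ k)
      rw [← ofReal_integral_eq_lintegral_ofReal hd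
        (Eventually.of_forall fun y => sub_nonneg.2 (hle k y)), integral_sub hG (hJ k)]
      exact ENNReal.ofReal_le_ofReal (by linarith [ha k])
    have h2 : ∀ y, liminf (fun k => ENNReal.ofReal (G y - J k y)) atTop
        = ENNReal.ofReal (G y - J' y) := fun y =>
      ((ENNReal.continuous_ofReal.tendsto _).comp (tendsto_const_nhds.sub (hlim y))).liminf_eq
    calc ∫⁻ y, ENNReal.ofReal (G y - J' y) ∂μ
        = ∫⁻ y, liminf (fun k => ENNReal.ofReal (G y - J k y)) atTop ∂μ := by simp_rw [h2]
      _ ≤ liminf (fun k => ∫⁻ y, ENNReal.ofReal (G y - J k y) ∂μ) atTop :=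
          lintegral_liminf_le' fun k => ((hG.sub (hJ k)).1.aemeasurable).ennreal_ofReal
      _ ≤ ENNReal.ofReal (∫ y, G y ∂μ - a) :=
          liminf_le_of_le (by isBoundedDefault) fun b hb => by
            obtain ⟨k, hk⟩ := hb.exists
            exact hk.trans (h1 k)
  have hd : Integrable (fun y => G y - J' y) μ := by
    refine ⟨hG.1.sub hm, ?_⟩
    rw [hasFiniteIntegral_iff_ofReal (Eventually.of_forall fun y => sub_nonneg.2 (hle' y))]
    exact key.trans_lt ENNReal.ofReal_lt_top
  have hJ' : Integrable J' μ := (hG.sub hd).congr (Eventually.of_forall fun y => by simp)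
  refine ⟨hJ', ?_⟩
  have h0 : 0 ≤ ∫ y, G y ∂μ - a :=
    sub_nonneg.2 ((ha 0).trans (integral_mono (hJ 0) hG (hle 0)))
  rw [← ofReal_integral_eq_lintegral_ofReal hd
    (Eventually.of_forall fun y => sub_nonneg.2 (hle' y)), integral_sub hG hJ',
    ENNReal.ofReal_le_ofReal_iff h0] at key
  linarith

lemma BD2.integrable_taylor {n : ℕ} {A : En n → ℝ} (hA : BD2 A) {μ : Measure (En n)}
    {Φ : En n → En n} (hΦm : Measurable Φ) (hΦ : Integrable (fun y => _root_.qf (Φ y)) μ)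
    (x : En n) :
    Integrable (fun y => A (x + Φ y) - A x - ⟪gradient A x, Φ y⟫) μ := by
  obtain ⟨C, -, hC⟩ := hA.taylor
  refine Integrable.mono' (hΦ.const_mul C) ?_ (Eventually.of_forall fun y => hC x (Φ y))
  have : Continuous fun z => A (x + z) - A x - ⟪gradient A x, z⟫ := by
    have := hA.1.continuous
    fun_prop
  exact (this.measurable.comp hΦm).aestronglyMeasurable

lemma hasDerivAt_qf_real (t : ℝ) : HasDerivAt (qf : ℝ → ℝ) (qgrad t) t := by
  have := (hasFDerivAt_qf t).hasDerivAt
  simpa using this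

lemma BD1.const_mul_qf (k a : ℝ) : BD1 (fun t => k * qf (t - a)) := by
  have h : ∀ t, HasDerivAt (fun t => k * qf (t - a)) (k * qgrad (t - a)) t := fun t =>
    ((hasDerivAt_qf_real (t - a)).comp_sub_const t a).const_mul k
  refine ⟨fun t => (h t).differentiableAt, |k|, fun t => ?_⟩
  rw [(h t).deriv, abs_mul]
  have := norm_qgrad_le (t - a)
  rw [Real.norm_eq_abs] at this
  nlinarith [abs_nonneg k]

lemma BD1.add {B B' : ℝ → ℝ} (h : BD1 B) (h' : BD1 B') : BD1 (fun t => B t + B' t) := by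
  obtain ⟨M, hM⟩ := h.2
  obtain ⟨M', hM'⟩ := h'.2
  refine ⟨h.1.add h'.1, M + M', fun t => ?_⟩
  rw [deriv_fun_add (h.1 t) (h'.1 t)]
  exact (abs_add_le _ _).trans (add_le_add (hM t) (hM' t))

/-- At a fixed time `t₀`, a bounded continuous function `w` is a pointwise limit of smooth
functions `V k` of `x` such that `V k + k q(· - t₀)` lies above `w` on the whole time interval. Each
`V k` is a smooth approximation of the supremum over `t` of `w - k q(t - t₀)` on a large ball, glued to
a constant outside it. -/
lemma exists_upper_approx {n : ℕ} {T : ℝ} (w : ℝ → En n → ℝ)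
    (hw : ContinuousOn (fun p : ℝ × En n => w p.1 p.2) (Set.Icc 0 T ×ˢ Set.univ))
    (hb : ∃ M, ∀ t ∈ Set.Icc (0 : ℝ) T, ∀ x, |w t x| ≤ M) {t₀ : ℝ} (ht₀ : t₀ ∈ Set.Icc 0 T) :
    ∃ (C : ℝ) (V : ℕ → En n → ℝ), (∀ k, BD2 (V k)) ∧
      (∀ (k : ℕ), ∀ t ∈ Set.Icc 0 T, ∀ x, w t x - k * qf (t - t₀) ≤ V k x) ∧
      (∀ k x, V k x ≤ C) ∧ ∀ x, Tendsto (fun k => V k x) atTop (𝓝 (w t₀ x)) := by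
  obtain ⟨M, hM⟩ := hb
  have h0T : (0 : ℝ) ≤ T := ht₀.1.trans ht₀.2
  let w' : ℝ → En n → ℝ := fun t x => w (Set.projIcc 0 T h0T t) x
  have hw'c : Continuous fun p : ℝ × En n => w' p.1 p.2 := by
    refine hw.comp_continuous (f := fun p : ℝ × En n => ((Set.projIcc 0 T h0T p.1 : ℝ), p.2)) ?_ ?_
    · exact ((continuous_subtype_val.comp (continuous_projIcc)).comp continuous_fst).prodMk
        continuous_snd
    · intro p; exact ⟨(Set.projIcc 0 T h0T p.1).2, Set.mem_univ _⟩
  have hw'e : ∀ t ∈ Set.Icc 0 T, ∀ x, w' t x = w t x := by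
    intro t ht x; simp only [w']; rw [Set.projIcc_of_mem h0T ht]
  let m : ℕ → En n → ℝ := fun k x => sSup ((fun t => w' t x - k * qf (t - t₀)) '' Set.Icc 0 T)
  have hmc : ∀ k, Continuous (m k) := by
    intro k
    refine isCompact_Icc.continuous_sSup (f := fun x t => w' t x - k * qf (t - t₀)) ?_
    have h1 : Continuous fun p : En n × ℝ => w' p.2 p.1 := hw'c.comp continuous_swap
    have h2 : Continuous fun p : En n × ℝ => qf (p.2 - t₀) :=
      continuous_qf.comp (continuous_snd.sub continuous_const)
    exact h1.sub (continuous_const.mul h2)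
  have hup : ∀ (k : ℕ), ∀ t ∈ Set.Icc 0 T, ∀ x, w' t x - k * qf (t - t₀) ≤ M := by
    intro k t ht x
    rw [hw'e t ht]
    have := (abs_le.1 (hM t ht x)).2
    have := mul_nonneg (Nat.cast_nonneg (α := ℝ) k) (qf_nonneg (t - t₀))
    linarith
  have hle_m : ∀ (k : ℕ), ∀ t ∈ Set.Icc 0 T, ∀ x, w t x - k * qf (t - t₀) ≤ m k x := by
    intro k t ht x
    rw [← hw'e t ht]
    refine le_csSup ⟨M, ?_⟩ ⟨t, ht, rfl⟩
    rintro _ ⟨s, hs, rfl⟩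
    exact hup k s hs x
  have hm_le : ∀ k x, m k x ≤ M := by
    intro k x
    refine csSup_le ⟨_, ⟨t₀, ht₀, rfl⟩⟩ ?_
    rintro _ ⟨s, hs, rfl⟩
    exact hup k s hs x
  have hmlim : ∀ x, Tendsto (fun k => m k x) atTop (𝓝 (w t₀ x)) := by
    intro x
    rw [Metric.tendsto_atTop]
    intro ε hε
    have hcx : Continuous fun t => w' t x := hw'c.comp (continuous_id.prodMk continuous_const)
    obtain ⟨η, hη, hη'⟩ := Metric.continuous_iff.1 hcx t₀ (ε / 2) (by linarith)
    have hqη : 0 < qf η := lt_of_le_of_ne (qf_nonneg _) fun h => hη.ne' (qf_eq_zero h.symm)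
    obtain ⟨N, hN⟩ := exists_nat_gt (2 * M / qf η)
    refine ⟨N, fun k hk => ?_⟩
    have h1 : w t₀ x ≤ m k x := by
      have := hle_m k t₀ ht₀ x
      simpa [qf_zero] using this
    have h2 : m k x ≤ w t₀ x + ε / 2 := by
      refine csSup_le ⟨_, ⟨t₀, ht₀, rfl⟩⟩ ?_
      rintro _ ⟨s, hs, rfl⟩
      have hkq := mul_nonneg (Nat.cast_nonneg (α := ℝ) k) (qf_nonneg (s - t₀))
      rcases lt_or_ge (dist s t₀) η with h | h
      · have := (abs_lt.1 (Real.dist_eq _ _ ▸ hη' s h)).2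
        rw [hw'e t₀ ht₀] at this
        simp only
        linarith
      · have h3 : qf η ≤ qf (s - t₀) := by
          apply qf_mono
          rw [Real.norm_of_nonneg hη.le, Real.norm_eq_abs, ← Real.dist_eq]
          exact h
        rw [div_lt_iff₀ hqη] at hN
        have h4 : (N : ℝ) * qf η ≤ k * qf (s - t₀) :=
          mul_le_mul (by exact_mod_cast hk) h3 hqη.le (Nat.cast_nonneg _)
        have h5 := (abs_le.1 (hM s hs x)).2
        have h6 := (abs_le.1 (hM t₀ ht₀ x)).1
        simp only
        rw [hw'e s hs]
        linarith
    rw [Real.dist_eq, abs_lt]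
    constructor <;> linarith
  have hg : ∀ k : ℕ, ∃ g : En n → ℝ, ContDiff ℝ 2 g ∧
      ∀ x, dist (g x) (m k x + 1 / ((k : ℝ) + 1)) < 1 / ((k : ℝ) + 1) := by
    intro k
    obtain ⟨g, hg, hg', -⟩ := ((hmc k).add continuous_const).exists_contDiff_approx 2
      (f := fun x => m k x + 1 / ((k : ℝ) + 1)) (ε := fun _ => 1 / ((k : ℝ) + 1))
      continuous_const (fun x => by positivity)
    exact ⟨g, hg, hg'⟩
  choose g hgc hg using hg
  have hg1 : ∀ k x, m k x ≤ g k x := by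
    intro k x
    have := (abs_lt.1 (Real.dist_eq _ _ ▸ hg k x)).1
    linarith
  have hg2 : ∀ k x, g k x ≤ m k x + 2 * (1 / ((k : ℝ) + 1)) := by
    intro k x
    have := (abs_lt.1 (Real.dist_eq _ _ ▸ hg k x)).2
    linarith
  have hk1 : ∀ k : ℕ, 1 / ((k : ℝ) + 1) ≤ 1 := by
    intro k
    rw [div_le_one (by positivity)]
    have := Nat.cast_nonneg (α := ℝ) k
    linarith
  let χ : ∀ k : ℕ, ContDiffBump (0 : En n) := fun k =>
    ⟨(k : ℝ) + 1, (k : ℝ) + 2, by positivity, by linarith⟩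
  refine ⟨M + 2, fun k x => (M + 2) + χ k x * (g k x - (M + 2)), fun k => ?_, fun k t ht x => ?_,
    fun k x => ?_, fun x => ?_⟩
  · refine (BD2.const _).add (BD2.of_hasCompactSupport ?_ ?_)
    · exact (χ k).contDiff.mul ((hgc k).sub contDiff_const)
    · exact (χ k).hasCompactSupport.mul_right
  · have h1 := hle_m k t ht x
    have h2 := hg1 k x
    have h3 := hm_le k x
    have h4 := (χ k).nonneg (x := x)
    have h5 := (χ k).le_one (x := x)
    simp only
    nlinarith [mul_nonneg h4 (sub_nonneg.2 (h1.trans h2)),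
      mul_nonneg (sub_nonneg.2 h5) (sub_nonneg.2 (h1.trans h3))]
  · have h2 := hg2 k x
    have h3 := hm_le k x
    have h4 := (χ k).nonneg (x := x)
    have h5 := hk1 k
    simp only
    nlinarith [mul_nonneg h4 (show 0 ≤ (M + 2) - g k x by linarith)]
  · have h1 : ∀ᶠ k : ℕ in atTop, (M + 2) + χ k x * (g k x - (M + 2)) = g k x := by
      obtain ⟨N, hN⟩ := exists_nat_ge ‖x‖
      filter_upwards [eventually_ge_atTop N] with k hk
      have : χ k x = 1 := by
        apply (χ k).one_of_mem_closedBall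
        rw [mem_closedBall_zero_iff]
        change ‖x‖ ≤ (k : ℝ) + 1
        have : (N : ℝ) ≤ k := by exact_mod_cast hk
        linarith
      rw [this]; ring
    refine Tendsto.congr' (h1.mono fun k hk => hk.symm) ?_
    refine tendsto_of_tendsto_of_tendsto_of_le_of_le (hmlim x) ?_ (fun k => hg1 k x)
      (fun k => hg2 k x)
    have := (hmlim x).add ((tendsto_one_div_add_atTop_nhds_zero_nat (𝕜 := ℝ)).const_mul 2)
    simpa using this

/-- If the viscosity inequality at `(t₀, x₀)` holds for all separated test functions `A(x) + B(t)`
touching `u` from above, then it also holds with the nonlocal term evaluated on `u` itself, only the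
gradient being taken from the test function. The test function is deformed to `u` away from `x₀`, in
two limits: first the outer part converges to `u`, then the ball where `A` is kept shrinks. -/
lemma jump_form {n : ℕ} {T : ℝ} {u : ℝ → En n → ℝ}
    (hu : ContinuousOn (fun p : ℝ × En n => u p.1 p.2) (Set.Icc 0 T ×ˢ Set.univ))
    (hub : ∃ M, ∀ t ∈ Set.Icc (0 : ℝ) T, ∀ x, |u t x| ≤ M) {t₀ : ℝ} (ht₀ : t₀ ∈ Set.Icc 0 T)
    {x₀ : En n} {μ : Measure (En n)} {Φ : En n → En n} (hΦm : Measurable Φ)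
    (hΦ : Integrable (fun y => qf (Φ y)) μ) {b₀ : En n} {r : ℝ}
    (H : ∀ (A : En n → ℝ) (B : ℝ → ℝ), BD2 A → BD1 B →
      (∀ t ∈ Set.Icc (0 : ℝ) T, ∀ x, u t x - A x - B t ≤ u t₀ x₀ - A x₀ - B t₀) →
      -deriv B t₀ - ⟪b₀, gradient A x₀⟫
        - ∫ y, (A (x₀ + Φ y) - A x₀ - ⟪gradient A x₀, Φ y⟫) ∂μ + r ≤ 0)
    {A : En n → ℝ} {B : ℝ → ℝ} (hA : BD2 A) (hB : BD1 B)
    (hmax : ∀ t ∈ Set.Icc (0 : ℝ) T, ∀ x, u t x - A x - B t ≤ u t₀ x₀ - A x₀ - B t₀) :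
    Integrable (fun y => u t₀ (x₀ + Φ y) - u t₀ x₀ - ⟪gradient A x₀, Φ y⟫) μ ∧
      -deriv B t₀ - ⟪b₀, gradient A x₀⟫
        - ∫ y, (u t₀ (x₀ + Φ y) - u t₀ x₀ - ⟪gradient A x₀, Φ y⟫) ∂μ + r ≤ 0 := by
  obtain ⟨M, hM⟩ := hub
  set d : ℝ := u t₀ x₀ - A x₀ - B t₀ with hd
  set p : En n := gradient A x₀ with hp
  set a : ℝ := r - deriv B t₀ - ⟪b₀, p⟫ with ha
  obtain ⟨MB, hMB⟩ := isCompact_Icc.exists_bound_of_continuousOn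
    (s := Set.Icc 0 T) hB.1.continuous.continuousOn
  obtain ⟨C, V, hV, hVu, hVC, hVlim⟩ := exists_upper_approx (T := T)
    (fun t x => u t x - B t - d)
    ((hu.sub (hB.1.continuous.comp continuous_fst).continuousOn).sub continuousOn_const)
    ⟨M + MB + |d|, fun t ht x => by
      have h1 := hM t ht x
      have h2 := hMB t ht
      rw [Real.norm_eq_abs] at h2
      exact (abs_sub _ _).trans (by linarith [abs_sub (u t x) (B t)])⟩ ht₀
  obtain ⟨CA, hCA0, hCA⟩ := hA.taylor
  -- the limit of the deformed test functions at fixed radius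
  have stage : ∀ χ : ContDiffBump x₀,
      Integrable (fun y => (χ (x₀ + Φ y) * A (x₀ + Φ y)
          + (1 - χ (x₀ + Φ y)) * (u t₀ (x₀ + Φ y) - B t₀ - d)) - A x₀ - ⟪p, Φ y⟫) μ ∧
        a ≤ ∫ y, ((χ (x₀ + Φ y) * A (x₀ + Φ y)
          + (1 - χ (x₀ + Φ y)) * (u t₀ (x₀ + Φ y) - B t₀ - d)) - A x₀ - ⟪p, Φ y⟫) ∂μ := by
    intro χ
    let Ak : ℕ → En n → ℝ := fun k x => V k x + χ x * (A x - V k x)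
    have hAk : ∀ k, BD2 (Ak k) := fun k =>
      (hV k).add (BD2.of_hasCompactSupport (χ.contDiff.mul (hA.1.sub (hV k).1))
        χ.hasCompactSupport.mul_right)
    have hAk_in : ∀ k, ∀ x ∈ Metric.closedBall x₀ χ.rIn, Ak k x = A x := by
      intro k x hx
      simp only [Ak]; rw [χ.one_of_mem_closedBall hx]; ring
    have hAk0 : ∀ k, Ak k x₀ = A x₀ := fun k =>
      hAk_in k x₀ (Metric.mem_closedBall_self χ.rIn_pos.le)
    have hgrad : ∀ k, gradient (Ak k) x₀ = p := by
      intro k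
      have : Ak k =ᶠ[𝓝 x₀] A := by
        filter_upwards [Metric.closedBall_mem_nhds x₀ χ.rIn_pos] with x hx using hAk_in k x hx
      rw [hp, gradient, gradient, this.fderiv_eq]
    have h_int : ∀ k, Integrable (fun y => Ak k (x₀ + Φ y) - A x₀ - ⟪p, Φ y⟫) μ := by
      intro k
      have := (hAk k).integrable_taylor hΦm hΦ x₀
      rwa [hgrad, hAk0] at this
    have hlow : ∀ k, a ≤ ∫ y, (Ak k (x₀ + Φ y) - A x₀ - ⟪p, Φ y⟫) ∂μ := by
      intro k
      have h := H (Ak k) (fun t => B t + k * qf (t - t₀)) (hAk k)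
        (hB.add (BD1.const_mul_qf k t₀)) ?_
      · rw [hgrad, hAk0] at h
        have hder : deriv (fun t => B t + k * qf (t - t₀)) t₀ = deriv B t₀ := by
          have h1 := (hB.1 t₀).hasDerivAt.add
            (((hasDerivAt_qf_real (t₀ - t₀)).comp_sub_const t₀ t₀).const_mul (k : ℝ))
          have := h1.deriv
          rw [sub_self, qgrad_zero, mul_zero, add_zero] at this
          exact this
        rw [hder] at h
        rw [ha]; linarith
      · intro t ht x
        have h1 := hmax t ht x
        have h2 := hVu k t ht x
        have h3 := χ.nonneg (x := x)
        have h4 := χ.le_one (x := x)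
        have h5 := mul_nonneg (Nat.cast_nonneg (α := ℝ) k) (qf_nonneg (t - t₀))
        simp only [sub_self, qf_zero, hAk0]
        simp only [Ak]
        nlinarith [mul_nonneg h3 (show 0 ≤ A x - (u t x - B t - d - k * qf (t - t₀)) by linarith),
          mul_nonneg (sub_nonneg.2 h4)
            (show 0 ≤ V k x - (u t x - B t - d - k * qf (t - t₀)) by linarith)]
    set q₀ : ℝ := qf χ.rIn with hq₀
    have hq₀pos : 0 < q₀ :=
      lt_of_le_of_ne (qf_nonneg _) fun h => χ.rIn_pos.ne' (qf_eq_zero h.symm)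
    set D : ℝ := (|C| + |A x₀| + ‖p‖) / q₀ + ‖p‖ with hD
    have hD0 : 0 ≤ D := by positivity
    have hbd : ∀ k z, Ak k (x₀ + z) - A x₀ - ⟪p, z⟫ ≤ (CA + D) * qf z := by
      intro k z
      have hAz := (abs_le.1 (hCA x₀ z)).2
      rw [← hp] at hAz
      have hqz := qf_nonneg z
      rcases le_or_gt ‖z‖ χ.rIn with hz | hz
      · rw [hAk_in k (x₀ + z) (by simpa using hz)]
        nlinarith [mul_nonneg hD0 hqz]
      · have hq : q₀ ≤ qf z := by
          apply qf_mono
          rw [Real.norm_of_nonneg χ.rIn_pos.le]; exact hz.le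
        have h1 : V k (x₀ + z) - A x₀ - ⟪p, z⟫ ≤ D * qf z := by
          have h2 := hVC k (x₀ + z)
          have h3 := le_abs_self C
          have h4 := neg_abs_le (A x₀)
          have h5 := (abs_le.1 (abs_real_inner_le_norm p z)).1
          have h6 := norm_sub_one_le_qf z
          have h7 : |C| + |A x₀| + ‖p‖ ≤ (|C| + |A x₀| + ‖p‖) / q₀ * qf z := by
            rw [div_mul_eq_mul_div, le_div_iff₀ hq₀pos]
            exact mul_le_mul_of_nonneg_left hq (by positivity)
          rw [hD, add_mul]
          nlinarith [norm_nonneg p]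
        have h3 := χ.nonneg (x := x₀ + z)
        have h4 := χ.le_one (x := x₀ + z)
        simp only [Ak]
        nlinarith [mul_nonneg h3 (show 0 ≤ (CA + D) * qf z - (A (x₀ + z) - A x₀ - ⟪p, z⟫) by
            nlinarith [mul_nonneg hD0 hqz]),
          mul_nonneg (sub_nonneg.2 h4)
            (show 0 ≤ (CA + D) * qf z - (V k (x₀ + z) - A x₀ - ⟪p, z⟫) by
              nlinarith [mul_nonneg hCA0 hqz])]
    refine reverse_fatou (hΦ.const_mul (CA + D)) h_int (fun k y => hbd k (Φ y)) (fun y => ?_) hlow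
    refine Tendsto.sub_const (Tendsto.sub_const ?_ _) _
    have h := hVlim (x₀ + Φ y)
    have h2 := h.add ((tendsto_const_nhds (x := A (x₀ + Φ y))).sub h |>.const_mul (χ (x₀ + Φ y)))
    convert h2 using 2
    ring
  let χ : ∀ k : ℕ, ContDiffBump x₀ := fun k =>
    ⟨(1 / ((k : ℝ) + 1)) / 2, 1 / ((k : ℝ) + 1), by positivity, half_lt_self (by positivity)⟩
  have hfin := reverse_fatou (J' := fun y => u t₀ (x₀ + Φ y) - u t₀ x₀ - ⟪p, Φ y⟫)
    (hA.integrable_taylor hΦm hΦ x₀) (fun k => (stage (χ k)).1)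
    (fun k y => ?_) (fun y => ?_) (fun k => (stage (χ k)).2)
  · refine ⟨hfin.1, ?_⟩
    have := hfin.2
    rw [ha] at this
    linarith
  · have h1 := hmax t₀ ht₀ (x₀ + Φ y)
    have h4 := (χ k).le_one (x := x₀ + Φ y)
    simp only [← hp]
    nlinarith [mul_nonneg (sub_nonneg.2 h4)
      (show 0 ≤ A (x₀ + Φ y) - (u t₀ (x₀ + Φ y) - B t₀ - d) by linarith)]
  · by_cases hz : Φ y = 0
    · refine tendsto_const_nhds.congr fun k => ?_
      rw [hz, add_zero, (χ k).one_of_mem_closedBall (Metric.mem_closedBall_self (χ k).rIn_pos.le)]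
      ring
    · have hev : ∀ᶠ k : ℕ in atTop, χ k (x₀ + Φ y) = 0 := by
        have := (tendsto_one_div_add_atTop_nhds_zero_nat (𝕜 := ℝ)).eventually_lt_const
          (norm_pos_iff.2 hz)
        filter_upwards [this] with k hk
        apply (χ k).zero_of_le_dist
        rw [dist_eq_norm, add_sub_cancel_left]
        exact hk.le
      refine tendsto_const_nhds.congr' (hev.mono fun k hk => ?_)
      simp only [hk, hd]; ring


/-! ### Viscosity inequalities with the solution in the nonlocal term -/

section Jump

variable {n : ℕ}

lemma BD2.gradient_add_const (A : En n → ℝ) (d : ℝ) (x : En n) :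
    gradient (fun x => A x + d) x = gradient A x := by
  rw [gradient, gradient, fderiv_add_const]

lemma isTestFnEvol_separated {A : En n → ℝ} {B : ℝ → ℝ} (hA : BD2 A) (hB : BD1 B) :
    IsTestFnEvol (fun t x => A x + B t) := by
  have e : ∀ t, fderiv ℝ (fun x => A x + B t) = fderiv ℝ A := fun t => by
    funext x; exact fderiv_add_const _
  obtain ⟨M, hM⟩ := hB.2
  obtain ⟨M₁, hM₁⟩ := hA.2.1
  obtain ⟨M₂, hM₂⟩ := hA.2.2
  refine ⟨(hA.1.continuous.comp continuous_snd).add (hB.1.continuous.comp continuous_fst),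
    fun x => hB.1.const_add _, ⟨M, fun t x => ?_⟩, fun t => hA.1.add contDiff_const,
    ⟨M₁, fun t x => ?_⟩, ⟨M₂, fun t x => ?_⟩⟩
  · rw [deriv_const_add]; exact hM t
  · rw [e]; exact hM₁ x
  · rw [e]; exact hM₂ x

lemma lopEvol_separated (ν : Measure (En n)) (F : En n → En n → En n) (b : En n → En n)
    (A : En n → ℝ) (B : ℝ → ℝ) (t : ℝ) (x : En n) :
    LopEvol ν F b (fun t x => A x + B t) t x = ⟪b x, gradient A x⟫
      + ∫ y, (A (x + F x y) - A x - ⟪gradient A x, F x y⟫) ∂(ν.restrict {(0 : En n)}ᶜ) := by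
  unfold LopEvol
  rw [BD2.gradient_add_const]
  congr 1
  refine integral_congr_ae (Eventually.of_forall fun y => ?_)
  simp only
  ring

variable {T : ℝ} {ν : Measure (En n)} {F : En n → En n → En n} {b : En n → En n}
  {c f φ : ℝ → En n → ℝ} {g : En n → ℝ}

lemma subsolution_jump {u : ℝ → En n → ℝ} (hu : IsEvolSubsolution T ν F b c f φ g u)
    {t₀ : ℝ} (ht₀ : t₀ ∈ Set.Ico 0 T) {x₀ : En n} (hF : Measurable (F x₀))
    (hq : Integrable (fun y => qf (F x₀ y)) (ν.restrict {(0 : En n)}ᶜ))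
    (hφ : φ t₀ x₀ < u t₀ x₀) {A : En n → ℝ} {B : ℝ → ℝ} (hA : BD2 A) (hB : BD1 B)
    (hmax : ∀ t ∈ Set.Icc (0 : ℝ) T, ∀ x, u t x - A x - B t ≤ u t₀ x₀ - A x₀ - B t₀) :
    Integrable (fun y => u t₀ (x₀ + F x₀ y) - u t₀ x₀ - ⟪gradient A x₀, F x₀ y⟫)
        (ν.restrict {(0 : En n)}ᶜ) ∧
      -deriv B t₀ - ⟪b x₀, gradient A x₀⟫
        - ∫ y, (u t₀ (x₀ + F x₀ y) - u t₀ x₀ - ⟪gradient A x₀, F x₀ y⟫)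
          ∂(ν.restrict {(0 : En n)}ᶜ) + (c t₀ x₀ * u t₀ x₀ - f t₀ x₀) ≤ 0 := by
  refine jump_form hu.1 hu.2.1 (Set.Ico_subset_Icc_self ht₀) hF hq (fun A B hA hB hmax => ?_)
    hA hB hmax
  set d := u t₀ x₀ - A x₀ - B t₀ with hd
  have hB' : BD1 (fun t => B t + d) := by
    obtain ⟨M, hM⟩ := hB.2
    exact ⟨hB.1.add_const d, M, fun t => by rw [deriv_add_const]; exact hM t⟩
  have e : A x₀ + (B t₀ + d) = u t₀ x₀ := by rw [hd]; ring
  have h := hu.2.2.2 (fun t x => A x + (B t + d)) (isTestFnEvol_separated hA hB') t₀ ht₀ x₀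
    (fun t ht x => by have := hmax t ht x; linarith) e
  rw [lopEvol_separated ν F b A (fun t => B t + d), e, deriv_const_add, deriv_add_const] at h
  rcases min_le_iff.1 h with h | h
  · linarith
  · linarith

lemma supersolution_obstacle {v : ℝ → En n → ℝ} (hv : IsEvolSupersolution T ν F b c f φ g v)
    {t₀ : ℝ} (ht₀ : t₀ ∈ Set.Ico 0 T) {x₀ : En n} {A : En n → ℝ} {B : ℝ → ℝ} (hA : BD2 A)
    (hB : BD1 B)
    (hmax : ∀ t ∈ Set.Icc (0 : ℝ) T, ∀ x, -v t x - A x - B t ≤ -v t₀ x₀ - A x₀ - B t₀) :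
    φ t₀ x₀ ≤ v t₀ x₀ ∧ -deriv B t₀ - ⟪b x₀, gradient A x₀⟫
        - ∫ y, (A (x₀ + F x₀ y) - A x₀ - ⟪gradient A x₀, F x₀ y⟫)
          ∂(ν.restrict {(0 : En n)}ᶜ) + -(c t₀ x₀ * v t₀ x₀ - f t₀ x₀) ≤ 0 := by
  set d := v t₀ x₀ + A x₀ + B t₀ with hd
  have hder : ∀ t, deriv (fun t => -B t + d) t = -deriv B t := fun t => by
    rw [deriv_add_const]; exact deriv.fun_neg
  have hB' : BD1 (fun t => -B t + d) := by
    obtain ⟨M, hM⟩ := hB.2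
    exact ⟨hB.1.neg.add_const d, M, fun t => by rw [hder, abs_neg]; exact hM t⟩
  have hA' : BD2 (fun x => (-1 : ℝ) * A x) := hA.const_mul (-1)
  have e : -1 * A x₀ + (-B t₀ + d) = v t₀ x₀ := by rw [hd]; ring
  have hg : gradient (fun x => (-1 : ℝ) * A x) x₀ = -gradient A x₀ := by
    rw [gradient, gradient, ← map_neg, fderiv_const_mul (hA.differentiable x₀)]
    simp
  have h := hv.2.2.2 (fun t x => -1 * A x + (-B t + d)) (isTestFnEvol_separated hA' hB') t₀ ht₀ x₀
    (fun t ht x => by have := hmax t ht x; linarith) e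
  rw [lopEvol_separated ν F b (fun x => -1 * A x) (fun t => -B t + d), e, deriv_const_add, hder,
    hg] at h
  obtain ⟨h1, h2⟩ := le_min_iff.1 h
  have hI : ∫ y, (-1 * A (x₀ + F x₀ y) - -1 * A x₀ - ⟪-gradient A x₀, F x₀ y⟫)
        ∂(ν.restrict {(0 : En n)}ᶜ)
      = -∫ y, (A (x₀ + F x₀ y) - A x₀ - ⟪gradient A x₀, F x₀ y⟫)
        ∂(ν.restrict {(0 : En n)}ᶜ) := by
    rw [← integral_neg]
    refine integral_congr_ae (Eventually.of_forall fun y => ?_)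
    simp only [inner_neg_left]
    ring
  rw [hI, inner_neg_right] at h1
  exact ⟨by linarith, by linarith⟩

lemma supersolution_jump {v : ℝ → En n → ℝ} (hv : IsEvolSupersolution T ν F b c f φ g v)
    {t₀ : ℝ} (ht₀ : t₀ ∈ Set.Ico 0 T) {x₀ : En n} (hF : Measurable (F x₀))
    (hq : Integrable (fun y => qf (F x₀ y)) (ν.restrict {(0 : En n)}ᶜ))
    {A : En n → ℝ} {B : ℝ → ℝ} (hA : BD2 A) (hB : BD1 B)
    (hmax : ∀ t ∈ Set.Icc (0 : ℝ) T, ∀ x, -v t x - A x - B t ≤ -v t₀ x₀ - A x₀ - B t₀) :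
    Integrable (fun y => -v t₀ (x₀ + F x₀ y) - -v t₀ x₀ - ⟪gradient A x₀, F x₀ y⟫)
        (ν.restrict {(0 : En n)}ᶜ) ∧
      -deriv B t₀ - ⟪b x₀, gradient A x₀⟫
        - ∫ y, (-v t₀ (x₀ + F x₀ y) - -v t₀ x₀ - ⟪gradient A x₀, F x₀ y⟫)
          ∂(ν.restrict {(0 : En n)}ᶜ) + -(c t₀ x₀ * v t₀ x₀ - f t₀ x₀) ≤ 0 :=
  jump_form (u := fun t x => -v t x) hv.1.neg
    (by obtain ⟨M, hM⟩ := hv.2.1; exact ⟨M, fun t ht x => by rw [abs_neg]; exact hM t ht x⟩)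
    (Set.Ico_subset_Icc_self ht₀) hF hq
    (fun _ _ hA hB hmax => (supersolution_obstacle hv ht₀ hA hB hmax).2) hA hB hmax

/-! ### The estimate at a maximum of the doubled functional -/

lemma gradient_qf (x : En n) : gradient (qf : En n → ℝ) x = qgrad x :=
  BD2.gradient_eq x _ (hasFDerivAt_qf x)

/-- The Taylor remainder of `q` at `x` along a jump `a + h`: the part `h`, of size `|x|` in `L²`,
enters quadratically but divided by `√(1 + |x|²)`. -/
lemma exists_qf_remainder_le : ∃ C, 0 ≤ C ∧ ∀ x a h : En n,
    qf (x + (a + h)) - qf x - ⟪qgrad x, a + h⟫ ≤ C * qf a + ‖h‖ ^ 2 / jb x := by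
  obtain ⟨C, hC0, hC⟩ := (BD2.qf (n := n)).taylor
  refine ⟨2 * C, by positivity, fun x a h => ?_⟩
  have h1 := qf_midpoint x a h
  have h2 := (abs_le.1 (hC x ((2 : ℝ) • a))).2
  have h3 := qf_taylor_le x ((2 : ℝ) • h)
  have h4 := qf_two_smul_le a
  rw [gradient_qf, real_inner_smul_right] at h2
  have e : ‖(2 : ℝ) • h‖ ^ 2 / (2 * jb x) = 2 * (‖h‖ ^ 2 / jb x) := by
    rw [norm_smul]; norm_num; have := (jb_pos x).ne'; field_simp
  rw [real_inner_smul_right, e] at h3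
  rw [inner_add_right]
  nlinarith

lemma integrable_sq_sub {μ : Measure (En n)} {K : ℝ} (hF : ∀ x, Measurable (F x))
    (hK : 0 ≤ K) {x₁ x₂ : En n}
    (h : ∫⁻ y, ENNReal.ofReal (‖F x₁ y - F x₂ y‖ ^ 2) ∂μ ≤ ENNReal.ofReal (K * ‖x₁ - x₂‖ ^ 2)) :
    Integrable (fun y => ‖F x₁ y - F x₂ y‖ ^ 2) μ ∧
      ∫ y, ‖F x₁ y - F x₂ y‖ ^ 2 ∂μ ≤ K * ‖x₁ - x₂‖ ^ 2 := by
  have hnn : 0 ≤ᵐ[μ] fun y => ‖F x₁ y - F x₂ y‖ ^ 2 :=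
    Eventually.of_forall fun y => sq_nonneg _
  have hi : Integrable (fun y => ‖F x₁ y - F x₂ y‖ ^ 2) μ := by
    refine ⟨(((hF x₁).sub (hF x₂)).norm.pow_const 2).aestronglyMeasurable, ?_⟩
    rw [hasFiniteIntegral_iff_ofReal hnn]
    exact h.trans_lt ENNReal.ofReal_lt_top
  refine ⟨hi, ?_⟩
  rwa [← ofReal_integral_eq_lintegral_ofReal hi hnn,
    ENNReal.ofReal_le_ofReal_iff (by positivity)] at h

/-- Subtraction of the two viscosity inequalities at a maximum point of
`u(t,x) − v(s,y) − E(t) − j q(x − y) − j q(t − s) − β q(x)`. -/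
lemma doubling_inequality {u v : ℝ → En n → ℝ} (hu : IsEvolSubsolution T ν F b c f φ g u)
    (hv : IsEvolSupersolution T ν F b c f φ g v) (hF : ∀ x, Measurable (F x))
    (hq : ∀ x, Integrable (fun y => qf (F x y)) (ν.restrict {(0 : En n)}ᶜ))
    {K Lb Cb C : ℝ} (hK : 0 ≤ K) (hLb : ∀ x y, ‖b x - b y‖ ≤ Lb * ‖x - y‖)
    (hCb : ∀ x, ‖b x‖ ≤ Cb)
    (hFL : ∀ x₁ x₂ : En n, ∫⁻ y in {(0 : En n)}ᶜ, ENNReal.ofReal (‖F x₁ y - F x₂ y‖ ^ 2) ∂ν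
      ≤ ENNReal.ofReal (K * ‖x₁ - x₂‖ ^ 2))
    (hC : ∀ x a h : En n,
      qf (x + (a + h)) - qf x - ⟪qgrad x, a + h⟫ ≤ C * qf a + ‖h‖ ^ 2 / jb x)
    {E : ℝ → ℝ} (hE : BD1 E) {j β : ℝ} (hj : 0 ≤ j) (hβ : 0 ≤ β) {t s : ℝ} {x y : En n}
    (ht : t ∈ Set.Ico 0 T) (hs : s ∈ Set.Ico 0 T) (hφ : φ t x < u t x)
    (hmax : ∀ t' ∈ Set.Icc (0 : ℝ) T, ∀ x', ∀ s' ∈ Set.Icc (0 : ℝ) T, ∀ y',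
      u t' x' - v s' y' - E t' - j * qf (x' - y') - j * qf (t' - s') - β * qf x'
        ≤ u t x - v s y - E t - j * qf (x - y) - j * qf (t - s) - β * qf x) :
    -deriv E t + (c t x * u t x - c s y * v s y) - (f t x - f s y)
      ≤ (2 * Lb + K) * (j * qf (x - y)) + β * (Cb
        + C * ∫ z in {(0 : En n)}ᶜ, qf (F 0 z) ∂ν + K) + K * (β * qf x) := by
  set μ := ν.restrict {(0 : En n)}ᶜ with hμ
  have ht' := Set.Ico_subset_Icc_self ht
  have hs' := Set.Ico_subset_Icc_self hs
  set p := qgrad (x - y) with hp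
  have hA₁ : BD2 (fun x' : En n => j * qf (x' - y) + β * qf x') :=
    ((BD2.qf.comp_sub y).const_mul j).add (BD2.qf.const_mul β)
  have hg₁ : gradient (fun x' : En n => j * qf (x' - y) + β * qf x') x = j • p + β • qgrad x := by
    refine BD2.gradient_eq x _ ?_
    have h := (((hasFDerivAt_comp_sub y).2 (hasFDerivAt_qf (x - y))).const_mul j).add
      ((hasFDerivAt_qf x).const_mul β)
    refine HasFDerivAt.congr_fderiv h ?_
    simp [hp]
  have hA₂ : BD2 (fun y' : En n => j * qf (y' - x)) := (BD2.qf.comp_sub x).const_mul j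
  have hg₂ : gradient (fun y' : En n => j * qf (y' - x)) y = -(j • p) := by
    refine BD2.gradient_eq y _ ?_
    have h := ((hasFDerivAt_comp_sub x).2 (hasFDerivAt_qf (y - x))).const_mul j
    refine HasFDerivAt.congr_fderiv h ?_
    rw [hp, ← neg_sub x y, qgrad_neg]
    simp
  have hder : ∀ a t : ℝ, HasDerivAt (fun t => j * qf (t - a)) (j * qgrad (t - a)) t := fun a t =>
    ((hasDerivAt_qf_real (t - a)).comp_sub_const t a).const_mul j
  have hd₁ : deriv (fun t' => E t' + j * qf (t' - s)) t = deriv E t + j * qgrad (t - s) :=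
    ((hE.1 t).hasDerivAt.add (hder s t)).deriv
  have hd₂ : deriv (fun s' => j * qf (s' - t)) s = -(j * qgrad (t - s)) := by
    rw [(hder t s).deriv, ← neg_sub t s, qgrad_neg]; ring
  obtain ⟨i₁, h₁⟩ := subsolution_jump hu ht (hF x) (hq x) hφ hA₁
    (hE.add (BD1.const_mul_qf j s)) (fun t' ht' x' => by
      have := hmax t' ht' x' s hs' y
      linarith)
  obtain ⟨i₂, h₂⟩ := supersolution_jump hv hs (hF y) (hq y) hA₂ (BD1.const_mul_qf j t)
    (fun s' hs' y' => by
      have := hmax t ht' x s' hs' y'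
      rw [← neg_sub x y', ← neg_sub t s', ← neg_sub x y, ← neg_sub t s, qf_neg, qf_neg, qf_neg,
        qf_neg]
      linarith)
  rw [hg₁] at i₁ h₁
  rw [hg₂] at i₂ h₂
  rw [hd₁] at h₁
  rw [hd₂] at h₂
  obtain ⟨iG, hG⟩ := integrable_sq_sub hF hK (hFL x y)
  obtain ⟨iH, hH⟩ := integrable_sq_sub hF hK (hFL x 0)
  rw [sub_zero] at hH
  have hxy := jb_pos (x - y)
  have hx := jb_pos x
  have h_int : ∫ z, (u t (x + F x z) - u t x - ⟪j • p + β • qgrad x, F x z⟫) ∂μ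
      + ∫ z, (-v s (y + F y z) - -v s y - ⟪-(j • p), F y z⟫) ∂μ
      ≤ j * (K * qf (x - y)) + β * (C * ∫ z, qf (F 0 z) ∂μ + K * jb x) := by
    rw [← integral_add i₁ i₂]
    have i₄ : Integrable (fun z => β * C * qf (F 0 z) + β / jb x * ‖F x z - F 0 z‖ ^ 2) μ :=
      ((hq 0).const_mul _).add (iH.const_mul _)
    have i₃ : Integrable (fun z => j / (2 * jb (x - y)) * ‖F x z - F y z‖ ^ 2
        + (β * C * qf (F 0 z) + β / jb x * ‖F x z - F 0 z‖ ^ 2)) μ :=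
      (iG.const_mul _).add i₄
    refine (integral_mono (i₁.add i₂) i₃ fun z => ?_).trans ?_
    · simp only [Pi.add_apply]
      have m := hmax t ht' (x + F x z) s hs' (y + F y z)
      have e1 : x + F x z - (y + F y z) = (x - y) + (F x z - F y z) := by abel
      rw [e1] at m
      have r1 := qf_taylor_le (x - y) (F x z - F y z)
      have r2 := hC x (F 0 z) (F x z - F 0 z)
      rw [add_sub_cancel] at r2
      rw [inner_sub_right, ← hp] at r1
      have r1' := mul_le_mul_of_nonneg_left r1 hj
      have r2' := mul_le_mul_of_nonneg_left r2 hβ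
      have e2 : j * (‖F x z - F y z‖ ^ 2 / (2 * jb (x - y)))
          = j / (2 * jb (x - y)) * ‖F x z - F y z‖ ^ 2 := by ring
      have e3 : β * (C * qf (F 0 z) + ‖F x z - F 0 z‖ ^ 2 / jb x)
          = β * C * qf (F 0 z) + β / jb x * ‖F x z - F 0 z‖ ^ 2 := by ring
      rw [e2] at r1'
      rw [e3] at r2'
      rw [inner_add_left, inner_neg_left, real_inner_smul_left, real_inner_smul_left,
        real_inner_smul_left]
      linarith
    · rw [integral_add (iG.const_mul _) i₄,
        integral_add ((hq 0).const_mul _) (iH.const_mul _), integral_const_mul,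
        integral_const_mul, integral_const_mul]
      have a1 : j / (2 * jb (x - y)) * ∫ z, ‖F x z - F y z‖ ^ 2 ∂μ ≤ j * (K * qf (x - y)) := by
        have := sq_div_jb_le (x - y)
        calc _ ≤ j / (2 * jb (x - y)) * (K * ‖x - y‖ ^ 2) :=
              mul_le_mul_of_nonneg_left hG (by positivity)
          _ = j * K / 2 * (‖x - y‖ ^ 2 / jb (x - y)) := by field_simp
          _ ≤ j * K / 2 * (2 * qf (x - y)) := mul_le_mul_of_nonneg_left this (by positivity)
          _ = _ := by ring
      have a2 : β / jb x * ∫ z, ‖F x z - F 0 z‖ ^ 2 ∂μ ≤ β * (K * jb x) := by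
        calc _ ≤ β / jb x * (K * ‖x‖ ^ 2) := mul_le_mul_of_nonneg_left hH (by positivity)
          _ ≤ β / jb x * (K * jb x ^ 2) := by
              refine mul_le_mul_of_nonneg_left (mul_le_mul_of_nonneg_left ?_ hK) (by positivity)
              rw [jb_sq]; linarith
          _ = _ := by field_simp
      linarith
  have hbp : ⟪b x - b y, p⟫ ≤ 2 * Lb * qf (x - y) := by
    have h1 := real_inner_le_norm (b x - b y) p
    have h2 : ‖p‖ = ‖x - y‖ / jb (x - y) := by
      rw [hp, qgrad, norm_smul, norm_inv, Real.norm_of_nonneg hxy.le]; ring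
    rcases (norm_nonneg (x - y)).eq_or_lt with h0 | h0
    · have h3 : x - y = 0 := by simpa using h0.symm
      rw [h2, ← h0] at h1
      rw [h3, qf_zero]
      simpa using h1
    · have hLb0 : 0 ≤ Lb := by
        have := (norm_nonneg _).trans (hLb x y)
        exact nonneg_of_mul_nonneg_left this h0
      calc _ ≤ ‖b x - b y‖ * ‖p‖ := h1
        _ ≤ Lb * ‖x - y‖ * ‖p‖ := mul_le_mul_of_nonneg_right (hLb x y) (norm_nonneg _)
        _ = Lb * (‖x - y‖ ^ 2 / jb (x - y)) := by rw [h2]; ring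
        _ ≤ Lb * (2 * qf (x - y)) := mul_le_mul_of_nonneg_left (sq_div_jb_le _) hLb0
        _ = _ := by ring
  have hbq : ⟪b x, qgrad x⟫ ≤ Cb := by
    have h1 := real_inner_le_norm (b x) (qgrad x)
    have h2 := hCb x
    have h3 := norm_qgrad_le x
    nlinarith [norm_nonneg (b x), norm_nonneg (qgrad x)]
  have hbp' := mul_le_mul_of_nonneg_left hbp hj
  have hbq' := mul_le_mul_of_nonneg_left hbq hβ
  rw [inner_sub_left] at hbp'
  rw [inner_add_right, real_inner_smul_right, real_inner_smul_right] at h₁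
  rw [inner_neg_right, real_inner_smul_right] at h₂
  have e : jb x = 1 + qf x := by unfold qf; ring
  rw [e] at h_int
  nlinarith

end Jump


/-! ### Doubling of variables -/

section Comparison

variable {n : ℕ} {T : ℝ}

lemma tendsto_of_continuousOn_Icc {w : ℝ → En n → ℝ}
    (hw : ContinuousOn (fun p : ℝ × En n => w p.1 p.2) (Set.Icc 0 T ×ˢ Set.univ))
    {t : ℕ → ℝ} {x : ℕ → En n} {t' : ℝ} {x' : En n} (ht : ∀ k, t k ∈ Set.Icc 0 T)
    (ht' : t' ∈ Set.Icc 0 T) (h1 : Tendsto t atTop (𝓝 t')) (h2 : Tendsto x atTop (𝓝 x')) :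
    Tendsto (fun k => w (t k) (x k)) atTop (𝓝 (w t' x')) := by
  have h := (hw (t', x') ⟨ht', Set.mem_univ _⟩).tendsto
  refine h.comp (f := fun k => (t k, x k)) (tendsto_nhdsWithin_iff.2 ⟨h1.prodMk_nhds h2, ?_⟩)
  exact Eventually.of_forall fun k => ⟨ht k, Set.mem_univ _⟩

/-- The doubled functional attains its maximum in a compact set independent of `j ≥ 1`. -/
lemma exists_doubled_max {u v : ℝ → En n → ℝ} {E : ℝ → ℝ} (hT : 0 ≤ T)
    (hu : ContinuousOn (fun p : ℝ × En n => u p.1 p.2) (Set.Icc 0 T ×ˢ Set.univ))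
    (hv : ContinuousOn (fun p : ℝ × En n => v p.1 p.2) (Set.Icc 0 T ×ˢ Set.univ))
    (hE : Continuous E) {L : ℝ}
    (hL : ∀ t ∈ Set.Icc (0 : ℝ) T, ∀ x, ∀ s ∈ Set.Icc (0 : ℝ) T, ∀ y,
      |u t x - v s y - E t| ≤ L) {β : ℝ} (hβ : 0 < β) {j : ℝ} (hj : 1 ≤ j) :
    ∃ z ∈ Set.Icc 0 T ×ˢ Metric.closedBall (0 : En n) (2 + 2 * L / β + 2 * L) ×ˢ Set.Icc 0 T ×ˢ
        Metric.closedBall (0 : En n) (2 + 2 * L / β + 2 * L),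
      ∀ t' ∈ Set.Icc (0 : ℝ) T, ∀ x', ∀ s' ∈ Set.Icc (0 : ℝ) T, ∀ y',
      u t' x' - v s' y' - E t' - j * qf (x' - y') - j * qf (t' - s') - β * qf x'
        ≤ u z.1 z.2.1 - v z.2.2.1 z.2.2.2 - E z.1 - j * qf (z.2.1 - z.2.2.2)
          - j * qf (z.1 - z.2.2.1) - β * qf z.2.1 := by
  set R := 2 + 2 * L / β + 2 * L with hR
  have h0 : (0 : ℝ) ∈ Set.Icc 0 T := ⟨le_rfl, hT⟩
  have hL0 : 0 ≤ L := (abs_nonneg _).trans (hL 0 h0 0 0 h0 0)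
  have hR0 : 0 ≤ R := by positivity
  set S := Set.Icc 0 T ×ˢ Metric.closedBall (0 : En n) R ×ˢ Set.Icc 0 T ×ˢ
    Metric.closedBall (0 : En n) R with hS
  have hSc : IsCompact S := isCompact_Icc.prod ((isCompact_closedBall _ _).prod
    (isCompact_Icc.prod (isCompact_closedBall _ _)))
  have hS0 : ((0 : ℝ), (0 : En n), (0 : ℝ), (0 : En n)) ∈ S := by
    simp [hS, hR0, hT]
  let Φ : ℝ × En n × ℝ × En n → ℝ := fun z =>
    u z.1 z.2.1 - v z.2.2.1 z.2.2.2 - E z.1 - j * qf (z.2.1 - z.2.2.2)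
          - j * qf (z.1 - z.2.2.1) - β * qf z.2.1
  have hΦ : ContinuousOn Φ S := by
    have c1 : ContinuousOn (fun z : ℝ × En n × ℝ × En n => u z.1 z.2.1) S :=
      hu.comp (f := fun z : ℝ × En n × ℝ × En n => (z.1, z.2.1)) (by fun_prop)
        fun z hz => ⟨hz.1, Set.mem_univ _⟩
    have c2 : ContinuousOn (fun z : ℝ × En n × ℝ × En n => v z.2.2.1 z.2.2.2) S :=
      hv.comp (f := fun z : ℝ × En n × ℝ × En n => (z.2.2.1, z.2.2.2)) (by fun_prop)
        fun z hz => ⟨hz.2.2.1, Set.mem_univ _⟩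
    have c3 : Continuous (qf : En n → ℝ) := continuous_qf
    have c4 : Continuous (qf : ℝ → ℝ) := continuous_qf
    exact ((((c1.sub c2).sub (by fun_prop)).sub (by fun_prop)).sub (by fun_prop)).sub (by fun_prop)
  obtain ⟨z, hz, hmax⟩ := hSc.exists_isMaxOn ⟨_, hS0⟩ hΦ
  refine ⟨z, hz, fun t' ht' x' s' hs' y' => ?_⟩
  by_cases hin : (t', x', s', y') ∈ S
  · exact hmax hin
  refine le_trans ?_ (hmax hS0)
  -- A point where the functional is at least its value at the origin lies in `S`.
  by_contra hlt
  push Not at hlt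
  apply hin
  have l1 := (abs_le.1 (hL t' ht' x' s' hs' y')).2
  have l2 := (abs_le.1 (hL 0 h0 0 0 h0 0)).1
  simp only [Φ, sub_zero, qf_zero, mul_zero] at hlt
  have q1 := qf_nonneg (x' - y')
  have q2 := qf_nonneg (t' - s')
  have q3 := qf_nonneg x'
  have n1 := norm_sub_one_le_qf (x' - y')
  have n3 := norm_sub_one_le_qf x'
  have p1 : qf (x' - y') ≤ j * qf (x' - y') := le_mul_of_one_le_left q1 hj
  have p2 : 0 ≤ j * qf (t' - s') := by positivity
  have p3 : 0 ≤ β * qf x' := by positivity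
  have k1 : ‖x' - y'‖ ≤ 1 + 2 * L := by linarith
  have k2 : qf x' ≤ 2 * L / β := by
    rw [le_div_iff₀ hβ]; linarith
  have k3 : ‖y'‖ ≤ ‖x'‖ + ‖x' - y'‖ := by
    have := norm_sub_le x' (x' - y')
    rwa [sub_sub_cancel] at this
  refine ⟨ht', ?_, hs', ?_⟩
  · rw [mem_closedBall_zero_iff]; simp only [hR]; linarith
  · rw [mem_closedBall_zero_iff]; simp only [hR]; linarith

/-- Doubling of variables: along a sequence of penalty weights `j k` the maximum points of the doubled
functional
converge to a diagonal point that maximizes the undoubled functional, and the penalty vanishes. -/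
lemma exists_doubling_sequence {u v : ℝ → En n → ℝ} {E : ℝ → ℝ} (hT : 0 ≤ T)
    (hu : ContinuousOn (fun p : ℝ × En n => u p.1 p.2) (Set.Icc 0 T ×ˢ Set.univ))
    (hv : ContinuousOn (fun p : ℝ × En n => v p.1 p.2) (Set.Icc 0 T ×ˢ Set.univ))
    (hE : Continuous E) {L : ℝ}
    (hL : ∀ t ∈ Set.Icc (0 : ℝ) T, ∀ x, ∀ s ∈ Set.Icc (0 : ℝ) T, ∀ y,
      |u t x - v s y - E t| ≤ L) {β : ℝ} (hβ : 0 < β) :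
    ∃ (j t s : ℕ → ℝ) (x y : ℕ → En n) (t₀ : ℝ) (x₀ : En n),
      (∀ k, 0 ≤ j k) ∧ (∀ k, t k ∈ Set.Icc 0 T) ∧ (∀ k, s k ∈ Set.Icc 0 T) ∧
      (∀ k, ∀ t' ∈ Set.Icc (0 : ℝ) T, ∀ x', ∀ s' ∈ Set.Icc (0 : ℝ) T, ∀ y',
        u t' x' - v s' y' - E t' - j k * qf (x' - y') - j k * qf (t' - s') - β * qf x'
          ≤ u (t k) (x k) - v (s k) (y k) - E (t k) - j k * qf (x k - y k)
            - j k * qf (t k - s k) - β * qf (x k)) ∧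
      t₀ ∈ Set.Icc 0 T ∧ Tendsto t atTop (𝓝 t₀) ∧ Tendsto s atTop (𝓝 t₀) ∧
      Tendsto x atTop (𝓝 x₀) ∧ Tendsto y atTop (𝓝 x₀) ∧
      Tendsto (fun k => j k * qf (x k - y k)) atTop (𝓝 0) ∧
      ∀ t' ∈ Set.Icc (0 : ℝ) T, ∀ x', u t' x' - v t' x' - E t' - β * qf x'
        ≤ u t₀ x₀ - v t₀ x₀ - E t₀ - β * qf x₀ := by
  have h0 : (0 : ℝ) ∈ Set.Icc 0 T := ⟨le_rfl, hT⟩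
  have hL0 : 0 ≤ L := (abs_nonneg _).trans (hL 0 h0 0 0 h0 0)
  choose z hzS hz using fun k : ℕ => exists_doubled_max hT hu hv hE hL hβ
    (j := (k : ℝ) + 1) (by linarith [k.cast_nonneg (α := ℝ)])
  obtain ⟨z', hz'S, θ, hθ, hlim⟩ := (isCompact_Icc.prod ((isCompact_closedBall _ _).prod
    (isCompact_Icc.prod (isCompact_closedBall _ _)))).tendsto_subseq hzS
  obtain ⟨t₀, x₀, s₀, y₀⟩ := z'
  have ht := (continuous_fst.tendsto _).comp hlim
  have hx := (continuous_fst.tendsto _).comp ((continuous_snd.tendsto _).comp hlim)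
  have hs := (continuous_fst.tendsto _).comp
    ((continuous_snd.tendsto _).comp ((continuous_snd.tendsto _).comp hlim))
  have hy := (continuous_snd.tendsto _).comp
    ((continuous_snd.tendsto _).comp ((continuous_snd.tendsto _).comp hlim))
  set j : ℕ → ℝ := fun k => (θ k : ℝ) + 1 with hj
  set t : ℕ → ℝ := fun k => (z (θ k)).1 with htd
  set x : ℕ → En n := fun k => (z (θ k)).2.1 with hxd
  set s : ℕ → ℝ := fun k => (z (θ k)).2.2.1 with hsd
  set y : ℕ → En n := fun k => (z (θ k)).2.2.2 with hyd
  change Tendsto t atTop (𝓝 t₀) at ht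
  change Tendsto x atTop (𝓝 x₀) at hx
  change Tendsto s atTop (𝓝 s₀) at hs
  change Tendsto y atTop (𝓝 y₀) at hy
  have hjpos : ∀ k, 0 < j k := fun k => by positivity
  have htI : ∀ k, t k ∈ Set.Icc 0 T := fun k => (hzS (θ k)).1
  have hsI : ∀ k, s k ∈ Set.Icc 0 T := fun k => (hzS (θ k)).2.2.1
  have ht₀ : t₀ ∈ Set.Icc 0 T := hz'S.1
  have hs₀ : s₀ ∈ Set.Icc 0 T := hz'S.2.2.1
  have hmax : ∀ k, ∀ t' ∈ Set.Icc (0 : ℝ) T, ∀ x', ∀ s' ∈ Set.Icc (0 : ℝ) T, ∀ y',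
        u t' x' - v s' y' - E t' - j k * qf (x' - y') - j k * qf (t' - s') - β * qf x'
          ≤ u (t k) (x k) - v (s k) (y k) - E (t k) - j k * qf (x k - y k)
            - j k * qf (t k - s k) - β * qf (x k) := fun k => hz (θ k)
  have hjtop : Tendsto j atTop atTop :=
    tendsto_atTop_add_const_right _ _ (tendsto_natCast_atTop_atTop.comp hθ.tendsto_atTop)
  have hsmall : Tendsto (fun k => 2 * L / j k) atTop (𝓝 0) := hjtop.const_div_atTop _
  have hpen : ∀ k, j k * qf (x k - y k) + j k * qf (t k - s k) ≤ 2 * L := fun k => by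
    have m := hmax k 0 h0 0 0 h0 0
    simp only [sub_zero, qf_zero, mul_zero] at m
    have l1 := (abs_le.1 (hL _ (htI k) (x k) _ (hsI k) (y k))).2
    have l2 := (abs_le.1 (hL 0 h0 0 0 h0 0)).1
    have := mul_nonneg hβ.le (qf_nonneg (x k))
    linarith
  have hxy : x₀ = y₀ := by
    refine sub_eq_zero.1 (qf_eq_zero (le_antisymm ?_ (qf_nonneg _)))
    refine le_of_tendsto_of_tendsto' ((continuous_qf.tendsto _).comp (hx.sub hy)) hsmall fun k => ?_
    have := mul_nonneg (hjpos k).le (qf_nonneg (t k - s k))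
    rw [le_div_iff₀ (hjpos k), mul_comm]
    exact (le_add_of_nonneg_right this).trans (hpen k)
  have hts : t₀ = s₀ := by
    refine sub_eq_zero.1 (qf_eq_zero (le_antisymm ?_ (qf_nonneg _)))
    refine le_of_tendsto_of_tendsto' ((continuous_qf.tendsto _).comp (ht.sub hs)) hsmall fun k => ?_
    have := mul_nonneg (hjpos k).le (qf_nonneg (x k - y k))
    rw [le_div_iff₀ (hjpos k), mul_comm]
    exact (le_add_of_nonneg_left this).trans (hpen k)
  subst hxy hts
  have hN : Tendsto (fun k => u (t k) (x k) - v (s k) (y k) - E (t k) - β * qf (x k)) atTop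
      (𝓝 (u t₀ x₀ - v t₀ x₀ - E t₀ - β * qf x₀)) :=
    (((tendsto_of_continuousOn_Icc hu htI ht₀ ht hx).sub
      (tendsto_of_continuousOn_Icc hv hsI ht₀ hs hy)).sub ((hE.tendsto _).comp ht)).sub
      (((continuous_qf.tendsto _).comp hx).const_mul β)
  have hdiag : ∀ k, ∀ t' ∈ Set.Icc (0 : ℝ) T, ∀ x', u t' x' - v t' x' - E t' - β * qf x'
      + j k * qf (x k - y k) + j k * qf (t k - s k)
        ≤ u (t k) (x k) - v (s k) (y k) - E (t k) - β * qf (x k) := fun k t' ht' x' => by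
    have m := hmax k t' ht' x' t' ht' x'
    simp only [sub_self, qf_zero, mul_zero, sub_zero] at m
    linarith
  refine ⟨j, t, s, x, y, t₀, x₀, fun k => (hjpos k).le, htI, hsI, hmax, ht₀, ht, hs, hx, hy, ?_,
    fun t' ht' x' => ?_⟩
  · have hN0 := hN.sub_const (u t₀ x₀ - v t₀ x₀ - E t₀ - β * qf x₀)
    rw [sub_self] at hN0
    refine squeeze_zero (fun k => mul_nonneg (hjpos k).le (qf_nonneg _)) (fun k => ?_) hN0
    have := mul_nonneg (hjpos k).le (qf_nonneg (t k - s k))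
    linarith [hdiag k t₀ ht₀ x₀]
  · refine ge_of_tendsto' hN fun k => ?_
    have := mul_nonneg (hjpos k).le (qf_nonneg (t k - s k))
    have := mul_nonneg (hjpos k).le (qf_nonneg (x k - y k))
    linarith [hdiag k t' ht' x']

/-! ### Comparison when the jumps are integrable -/

/-- A time weight that is decreasing at rate at least `l` on `[0, T]`, with derivative bounded on all
of `ℝ`; the arctangent keeps `exp` within bounds. -/
lemma exists_time_weight {l : ℝ} (hl : 0 ≤ l) : ∃ (E : ℝ → ℝ) (e₀ : ℝ), BD1 E ∧ 0 < e₀ ∧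
    ∀ t ∈ Set.Icc (0 : ℝ) T, e₀ ≤ E t ∧ E t ≤ 1 ∧ l * E t ≤ -deriv E t := by
  set m := l * (1 + T ^ 2) with hm
  have hm0 : 0 ≤ m := by positivity
  have hd : ∀ t, HasDerivAt (fun t => Real.exp (-m * Real.arctan t))
      (Real.exp (-m * Real.arctan t) * (-m * (1 / (1 + t ^ 2)))) t := fun t =>
    ((Real.hasDerivAt_arctan t).const_mul (-m)).exp
  have ha : ∀ t, |Real.arctan t| ≤ 2 := fun t => by
    rw [abs_le]
    have := Real.neg_pi_div_two_lt_arctan t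
    have := Real.arctan_lt_pi_div_two t
    have := Real.pi_lt_four
    constructor <;> linarith
  refine ⟨fun t => Real.exp (-m * Real.arctan t), Real.exp (-m * 2),
    ⟨fun t => (hd t).differentiableAt, Real.exp (m * 2) * m, fun t => ?_⟩, Real.exp_pos _,
    fun t ht => ⟨?_, ?_, ?_⟩⟩
  · have h1 : 1 / (1 + t ^ 2) ≤ 1 := by
      rw [div_le_one (by positivity)]; nlinarith [sq_nonneg t]
    have h0 : 0 ≤ 1 / (1 + t ^ 2) := by positivity
    rw [(hd t).deriv, abs_mul, abs_of_pos (Real.exp_pos _), abs_mul, abs_neg, abs_of_nonneg hm0,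
      abs_of_nonneg h0]
    refine mul_le_mul (Real.exp_le_exp.2 ?_) (by nlinarith) (by positivity) (Real.exp_pos _).le
    nlinarith [(abs_le.1 (ha t)).1]
  · exact Real.exp_le_exp.2 (by nlinarith [(abs_le.1 (ha t)).2])
  · have : 0 ≤ Real.arctan t := Real.arctan_nonneg.2 ht.1
    exact Real.exp_le_one_iff.2 (by nlinarith)
  · rw [(hd t).deriv]
    have h1 : l ≤ m * (1 / (1 + t ^ 2)) := by
      rw [hm, mul_one_div, le_div_iff₀ (by positivity)]
      have : t ^ 2 ≤ T ^ 2 := by nlinarith [ht.1, ht.2]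
      nlinarith
    nlinarith [Real.exp_pos (-m * Real.arctan t)]

variable {ν : Measure (En n)} {F : En n → En n → En n} {b : En n → En n}
  {c f φ : ℝ → En n → ℝ} {g : En n → ℝ}

/-- Comparison when `q ∘ F(x, ·)` is integrable for all `x`, so that all nonlocal terms converge. If
`κ > 0` is least with `u - v ≤ κ E`, then doubling variables near an almost-contact point gives
`(Cc + 1) κ E + c (u - v) ≤ κ E / 2` at some point with `0 < u - v ≤ κ E`, which is impossible
for `|c| ≤ Cc`. -/
lemma comparison_of_integrable (hT : 0 < T) {u v : ℝ → En n → ℝ}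
    (hu : IsEvolSubsolution T ν F b c f φ g u) (hv : IsEvolSupersolution T ν F b c f φ g v)
    (hF : ∀ x, Measurable (F x))
    (hq : ∀ x, Integrable (fun y => qf (F x y)) (ν.restrict {(0 : En n)}ᶜ))
    {K Lb Cb : ℝ} (hK : 0 ≤ K) (hLb : ∀ x y, ‖b x - b y‖ ≤ Lb * ‖x - y‖)
    (hCb : ∀ x, ‖b x‖ ≤ Cb)
    (hFL : ∀ x₁ x₂ : En n, ∫⁻ y in {(0 : En n)}ᶜ, ENNReal.ofReal (‖F x₁ y - F x₂ y‖ ^ 2) ∂ν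
      ≤ ENNReal.ofReal (K * ‖x₁ - x₂‖ ^ 2))
    (hc : ContinuousOn (fun p : ℝ × En n => c p.1 p.2) (Set.Icc 0 T ×ˢ Set.univ))
    (hf : ContinuousOn (fun p : ℝ × En n => f p.1 p.2) (Set.Icc 0 T ×ˢ Set.univ))
    (hφ : ContinuousOn (fun p : ℝ × En n => φ p.1 p.2) (Set.Icc 0 T ×ˢ Set.univ))
    (hc_bdd : ∃ M, ∀ t ∈ Set.Icc (0 : ℝ) T, ∀ x, |c t x| ≤ M) :
    ∀ t ∈ Set.Icc (0 : ℝ) T, ∀ x : En n, u t x ≤ v t x := by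
  by_contra hcon
  push Not at hcon
  obtain ⟨τ, hτ, ξ, hξ⟩ := hcon
  obtain ⟨Cc, hCc⟩ := hc_bdd
  obtain ⟨Mu, hMu⟩ := hu.2.1
  obtain ⟨Mv, hMv⟩ := hv.2.1
  have h0 : (0 : ℝ) ∈ Set.Icc 0 T := ⟨le_rfl, hT.le⟩
  have hCc0 : 0 ≤ Cc := (abs_nonneg _).trans (hCc 0 h0 0)
  have hCb0 : 0 ≤ Cb := (norm_nonneg _).trans (hCb 0)
  obtain ⟨E, e₀, hE, he₀, hE'⟩ := exists_time_weight (T := T) (l := Cc + 1) (by linarith)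
  obtain ⟨C, hC0, hC⟩ := exists_qf_remainder_le (n := n)
  -- The least `κ` with `u - v ≤ κ E`.
  set S : Set ℝ := {r | ∃ t ∈ Set.Icc (0 : ℝ) T, ∃ x, r = (u t x - v t x) / E t} with hS
  have hSb : BddAbove S := by
    refine ⟨(Mu + Mv) / e₀, ?_⟩
    rintro r ⟨t, ht, x, rfl⟩
    have h1 := abs_le.1 (hMu t ht x)
    have h2 := abs_le.1 (hMv t ht x)
    refine div_le_div₀ ?_ ?_ he₀ (hE' t ht).1
    · linarith
    · linarith
  set κ := sSup S with hκ
  have hEpos : ∀ t ∈ Set.Icc (0 : ℝ) T, 0 < E t := fun t ht => he₀.trans_le (hE' t ht).1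
  have hκ0 : 0 < κ := lt_of_lt_of_le (div_pos (sub_pos.2 hξ) (hEpos τ hτ))
    (le_csSup hSb ⟨τ, hτ, ξ, rfl⟩)
  have hle : ∀ t ∈ Set.Icc (0 : ℝ) T, ∀ x, u t x - v t x ≤ κ * E t := fun t ht x => by
    rw [← div_le_iff₀ (hEpos t ht)]
    exact le_csSup hSb ⟨t, ht, x, rfl⟩
  set e := κ * e₀ with he
  have he0 : 0 < e := mul_pos hκ0 he₀
  set δ := e / (8 * (K + 1)) with hδ
  have hδ0 : 0 < δ := by positivity
  have hKδ : K * (2 * δ) ≤ e / 4 := by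
    have : (K + 1) * (2 * δ) = e / 4 := by rw [hδ]; field_simp; norm_num
    nlinarith
  have hδe : 2 * δ < e := by
    have : (K + 1) * (2 * δ) = e / 4 := by rw [hδ]; field_simp; norm_num
    nlinarith
  obtain ⟨τ, hτ, ξ, hξ⟩ : ∃ τ ∈ Set.Icc (0 : ℝ) T, ∃ ξ, κ * E τ - δ ≤ u τ ξ - v τ ξ := by
    have hne : S.Nonempty := ⟨_, τ, hτ, ξ, rfl⟩
    obtain ⟨r, ⟨t, ht, x, rfl⟩, hr⟩ := exists_lt_of_lt_csSup hne
      (show κ - δ < sSup S by linarith)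
    refine ⟨t, ht, x, ?_⟩
    rw [lt_div_iff₀ (hEpos t ht)] at hr
    nlinarith [(hE' t ht).2.1]
  set C₁ := Cb + C * ∫ z in {(0 : En n)}ᶜ, qf (F 0 z) ∂ν + K with hC₁
  have hC₁0 : 0 ≤ C₁ := by
    have : 0 ≤ ∫ z in {(0 : En n)}ᶜ, qf (F 0 z) ∂ν := integral_nonneg fun z => qf_nonneg _
    exact add_nonneg (add_nonneg hCb0 (mul_nonneg hC0 this)) hK
  clear_value C₁ δ e κ
  set β := min (δ / (qf ξ + 1)) (e / (4 * (C₁ + 1))) with hβ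
  have hqξ := qf_nonneg ξ
  have hβ0 : 0 < β := lt_min (by positivity) (by positivity)
  have hβξ : β * qf ξ ≤ δ := by
    have : β ≤ δ / (qf ξ + 1) := min_le_left _ _
    rw [le_div_iff₀ (by positivity)] at this
    nlinarith
  have hβC : β * C₁ ≤ e / 4 := by
    have : β ≤ e / (4 * (C₁ + 1)) := min_le_right _ _
    rw [le_div_iff₀ (by positivity)] at this
    nlinarith
  clear_value β
  have hκE : BD1 (fun t => κ * E t) := by
    obtain ⟨M, hM⟩ := hE.2
    refine ⟨hE.1.const_mul κ, κ * M, fun t => ?_⟩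
    rw [deriv_const_mul κ (hE.1 t), abs_mul, abs_of_pos hκ0]
    exact mul_le_mul_of_nonneg_left (hM t) hκ0.le
  obtain ⟨j, t, s, x, y, t₀, x₀, hj, htI, hsI, hmax, ht₀, ht, hs, hx, hy, hpen, hdiag⟩ :=
    exists_doubling_sequence hT.le hu.1 hv.1 hκE.1.continuous (L := Mu + Mv + κ)
      (fun t ht x s hs y => by
        have h1 := abs_le.1 (hMu t ht x)
        have h2 := abs_le.1 (hMv s hs y)
        have h3 := (hE' t ht).2.1
        have h4 := hEpos t ht
        rw [abs_le]
        constructor <;> nlinarith) hβ0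
  have hqx := qf_nonneg x₀
  have hd := hdiag τ hτ ξ
  have hle₀ := hle t₀ ht₀ x₀
  have hβx : β * qf x₀ ≤ 2 * δ := by linarith
  have hE₀ := (hE' t₀ ht₀).1
  have heE : e ≤ κ * E t₀ := he ▸ mul_le_mul_of_nonneg_left hE₀ hκ0.le
  have hβqx : 0 ≤ β * qf x₀ := by positivity
  have hpos : 0 < u t₀ x₀ - v t₀ x₀ := by linarith
  have htT : t₀ < T := by
    refine lt_of_le_of_ne ht₀.2 fun h => ?_
    have h1 := hu.2.2.1 x₀
    have h2 := hv.2.2.1 x₀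
    rw [h] at hpos
    linarith
  have hut := tendsto_of_continuousOn_Icc hu.1 htI ht₀ ht hx
  have hvt := tendsto_of_continuousOn_Icc hv.1 hsI ht₀ hs hy
  have htev : ∀ᶠ k in atTop, t k ∈ Set.Ico 0 T := by
    filter_upwards [ht.eventually_lt_const htT] with k hk using ⟨(htI k).1, hk⟩
  have hsev : ∀ᶠ k in atTop, s k ∈ Set.Ico 0 T := by
    filter_upwards [hs.eventually_lt_const htT] with k hk using ⟨(hsI k).1, hk⟩
  have hobs : φ t₀ x₀ ≤ v t₀ x₀ := by
    refine le_of_tendsto_of_tendsto (tendsto_of_continuousOn_Icc hφ hsI ht₀ hs hy) hvt ?_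
    filter_upwards [hsev] with k hk
    refine (supersolution_obstacle hv hk (A := fun y' => j k * qf (y' - x k))
      (B := fun s' => j k * qf (s' - t k)) ((BD2.qf.comp_sub (x k)).const_mul (j k))
      (BD1.const_mul_qf (j k) (t k)) fun s' hs' y' => ?_).1
    have := hmax k (t k) (htI k) (x k) s' hs' y'
    rw [← neg_sub (x k) y', ← neg_sub (t k) s', ← neg_sub (x k) (y k), ← neg_sub (t k) (s k),
      qf_neg, qf_neg, qf_neg, qf_neg]
    linarith
  have hφev : ∀ᶠ k in atTop, φ (t k) (x k) < u (t k) (x k) :=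
    (tendsto_of_continuousOn_Icc hφ htI ht₀ ht hx).eventually_lt hut (by linarith)
  have hfin : (Cc + 1) * (κ * E t₀) + (c t₀ x₀ * u t₀ x₀ - c t₀ x₀ * v t₀ x₀)
      - (f t₀ x₀ - f t₀ x₀) ≤ (2 * Lb + K) * 0 + β * C₁ + K * (β * qf x₀) := by
    refine le_of_tendsto_of_tendsto
      (f := fun k => (Cc + 1) * (κ * E (t k))
        + (c (t k) (x k) * u (t k) (x k) - c (s k) (y k) * v (s k) (y k))
        - (f (t k) (x k) - f (s k) (y k)))
      (g := fun k => (2 * Lb + K) * (j k * qf (x k - y k)) + β * C₁ + K * (β * qf (x k)))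
      (b := atTop) ?_ ?_ ?_
    · exact (((((hκE.1.continuous.tendsto _).comp ht).const_mul _).add
        (((tendsto_of_continuousOn_Icc hc htI ht₀ ht hx).mul hut).sub
          ((tendsto_of_continuousOn_Icc hc hsI ht₀ hs hy).mul hvt))).sub
        ((tendsto_of_continuousOn_Icc hf htI ht₀ ht hx).sub
          (tendsto_of_continuousOn_Icc hf hsI ht₀ hs hy)))
    · exact ((hpen.const_mul _).add_const _).add
        ((((continuous_qf.tendsto _).comp hx).const_mul β).const_mul K)
    · filter_upwards [htev, hsev, hφev] with k h1 h2 h3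
      have hk := doubling_inequality hu hv hF hq hK hLb hCb hFL hC hκE (hj k) hβ0.le h1 h2 h3
        (hmax k)
      rw [deriv_const_mul κ (hE.1 (t k)), ← hC₁] at hk
      have := mul_le_mul_of_nonneg_left (hE' (t k) (htI k)).2.2 hκ0.le
      linarith
  have hcb := (abs_le.1 (hCc t₀ ht₀ x₀)).1
  have h1 : -(Cc * (κ * E t₀)) ≤ c t₀ x₀ * (u t₀ x₀ - v t₀ x₀) := by nlinarith
  have h2 : K * (β * qf x₀) ≤ K * (2 * δ) := mul_le_mul_of_nonneg_left hβx hK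
  linarith

/-! ### Reduction to the local equation when the jumps are not integrable -/

/-- By the `L²` Lipschitz bound on `F`, integrability of `q ∘ F(x, ·)` does not depend on `x`. -/
lemma integrable_qf_of_integrable_qf {K : ℝ} (hK : 0 ≤ K) (hF : ∀ x, Measurable (F x))
    (hFL : ∀ x₁ x₂ : En n, ∫⁻ y in {(0 : En n)}ᶜ, ENNReal.ofReal (‖F x₁ y - F x₂ y‖ ^ 2) ∂ν
      ≤ ENNReal.ofReal (K * ‖x₁ - x₂‖ ^ 2)) {x₁ x₂ : En n}
    (h : Integrable (fun y => qf (F x₁ y)) (ν.restrict {(0 : En n)}ᶜ)) :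
    Integrable (fun y => qf (F x₂ y)) (ν.restrict {(0 : En n)}ᶜ) := by
  refine Integrable.mono' ((h.const_mul 2).add (integrable_sq_sub hF hK (hFL x₂ x₁)).1)
    (continuous_qf.measurable.comp (hF x₂)).aestronglyMeasurable (Eventually.of_forall fun y => ?_)
  rw [Real.norm_of_nonneg (qf_nonneg _)]
  have := qf_add_le (F x₁ y) (F x₂ y - F x₁ y)
  rwa [add_sub_cancel] at this

set_option maxSynthPendingDepth 3 in
lemma isTestFnEvol_add_qf {w : ℝ → En n → ℝ} (hw : IsTestFnEvol w) (r : ℝ) (a : En n) :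
    IsTestFnEvol (fun t x => w t x + r * qf (x - a)) := by
  have hA : BD2 (fun x : En n => r * qf (x - a)) := (BD2.qf.comp_sub a).const_mul r
  obtain ⟨h1, h2, ⟨M, hM⟩, h4, ⟨M₁, hM₁⟩, ⟨M₂, hM₂⟩⟩ := hw
  obtain ⟨N₁, hN₁⟩ := hA.2.1
  obtain ⟨N₂, hN₂⟩ := hA.2.2
  have hw2 : ∀ t, BD2 (w t) := fun t => ⟨h4 t, ⟨M₁, hM₁ t⟩, ⟨M₂, hM₂ t⟩⟩
  have e : ∀ t, fderiv ℝ (fun x => w t x + r * qf (x - a))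
      = fun x => fderiv ℝ (w t) x + fderiv ℝ (fun x => r * qf (x - a)) x := fun t => by
    funext x; exact fderiv_fun_add ((hw2 t).differentiable x) (hA.differentiable x)
  refine ⟨h1.add (hA.1.continuous.comp continuous_snd), fun x => (h2 x).add_const _,
    ⟨M, fun t x => ?_⟩, fun t => (h4 t).add hA.1, ⟨M₁ + N₁, fun t x => ?_⟩,
    ⟨M₂ + N₂, fun t x => ?_⟩⟩
  · rw [deriv_add_const]; exact hM t x
  · rw [e]; exact (norm_add_le _ _).trans (add_le_add (hM₁ t x) (hN₁ x))
  · rw [e, fderiv_fun_add ((hw2 t).differentiable_fderiv x) (hA.differentiable_fderiv x)]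
    exact (norm_add_le _ _).trans (add_le_add (hM₂ t x) (hN₂ x))

/-- If the jumps from `x` are too large to be integrated, then one of `w` and `w + r q(· - x)`
(`r ≠ 0`), which agree to first order at `x`, has a divergent nonlocal term. The Bochner integral
assigns it the value `0`, so that the operator reduces to its drift part. -/
lemma lopEvol_eq_of_not_integrable {w : ℝ → En n → ℝ}
    (hw : IsTestFnEvol w) {t : ℝ} {x : En n}
    (hq : ¬ Integrable (fun y => qf (F x y)) (ν.restrict {(0 : En n)}ᶜ)) {r : ℝ} (hr : r ≠ 0) :
    LopEvol ν F b w t x = LopEvol 0 F b w t x ∨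
      LopEvol ν F b (fun t' x' => w t' x' + r * qf (x' - x)) t x = LopEvol 0 F b w t x := by
  have hg : gradient (fun x' => w t x' + r * qf (x' - x)) x = gradient (w t) x := by
    refine BD2.gradient_eq x _ ?_
    have hwd : HasFDerivAt (w t) (innerSL ℝ (gradient (w t) x)) x := by
      refine ((hw.2.2.2.1 t).differentiable (by norm_num) x).hasFDerivAt.congr_fderiv ?_
      ext z
      rw [BD2.fderiv_eq]; simp
    have h := hwd.add (((hasFDerivAt_comp_sub x).2 (hasFDerivAt_qf (x - x))).const_mul r)
    refine HasFDerivAt.congr_fderiv h ?_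
    simp [qgrad_zero]
  by_cases hi : Integrable (fun y => w t (x + F x y) - w t x - ⟪gradient (w t) x, F x y⟫)
      (ν.restrict {(0 : En n)}ᶜ)
  · right
    unfold LopEvol
    simp only [hg]
    rw [integral_undef, Measure.restrict_zero, integral_zero_measure]
    intro hi'
    apply hq
    refine ((hi'.sub hi).const_mul r⁻¹).congr (Eventually.of_forall fun y => ?_)
    simp only [Pi.sub_apply, add_sub_cancel_left, sub_self, qf_zero]
    field_simp
    ring
  · left
    unfold LopEvol
    rw [integral_undef hi, Measure.restrict_zero, integral_zero_measure]

/-- With jumps too large to be integrated at any point, viscosity subsolutions are subsolutions of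
the equation without jumps. -/
lemma IsEvolSubsolution.zero_measure
    (hq : ∀ x, ¬ Integrable (fun y => qf (F x y)) (ν.restrict {(0 : En n)}ᶜ))
    {u : ℝ → En n → ℝ} (hu : IsEvolSubsolution T ν F b c f φ g u) :
    IsEvolSubsolution T 0 F b c f φ g u := by
  refine ⟨hu.1, hu.2.1, hu.2.2.1, fun w hw t₀ ht₀ x₀ hmax heq => ?_⟩
  rcases lopEvol_eq_of_not_integrable (b := b) (t := t₀) hw (hq x₀) one_ne_zero with h | h
  · rw [← h]
    exact hu.2.2.2 w hw t₀ ht₀ x₀ hmax heq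
  · have := hu.2.2.2 _ (isTestFnEvol_add_qf hw 1 x₀) t₀ ht₀ x₀ (fun t ht x => by
      have := hmax t ht x
      have := qf_nonneg (x - x₀)
      simp only [sub_self, qf_zero]
      linarith) (by simpa [qf_zero] using heq)
    rw [h, deriv_add_const] at this
    simpa [qf_zero] using this

lemma IsEvolSupersolution.zero_measure
    (hq : ∀ x, ¬ Integrable (fun y => qf (F x y)) (ν.restrict {(0 : En n)}ᶜ))
    {v : ℝ → En n → ℝ} (hv : IsEvolSupersolution T ν F b c f φ g v) :
    IsEvolSupersolution T 0 F b c f φ g v := by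
  refine ⟨hv.1, hv.2.1, hv.2.2.1, fun w hw t₀ ht₀ x₀ hmin heq => ?_⟩
  rcases lopEvol_eq_of_not_integrable (b := b) (t := t₀) hw (hq x₀)
    (neg_ne_zero.2 one_ne_zero) with h | h
  · rw [← h]
    exact hv.2.2.2 w hw t₀ ht₀ x₀ hmin heq
  · have := hv.2.2.2 _ (isTestFnEvol_add_qf hw (-1) x₀) t₀ ht₀ x₀ (fun t ht x => by
      have := hmin t ht x
      have := qf_nonneg (x - x₀)
      simp only [sub_self, qf_zero]
      linarith) (by simpa [qf_zero] using heq)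
    rw [h, deriv_add_const] at this
    simpa [qf_zero] using this

end Comparison

/-- Comparison principle for the evolution obstacle problem: under Assumption (Coefficients),
with `g` bounded continuous, `c, f, φ` continuous on `[0,T] × ℝⁿ` and `c` bounded, the
compatibility condition `g ≥ φ(T,·)`, and `lim_{y→0} F(x,y) = 0`, any bounded viscosity
subsolution `u` lies below any bounded viscosity supersolution `v` on `[0,T] × ℝⁿ`. -/
theorem comparison_principle_evolution
    (n : ℕ) (T : ℝ) (hT : 0 < T) (ν : Measure (En n)) [SigmaFinite ν]
    (F : En n → En n → En n) (b : En n → En n) (ρ : En n → ℝ) (K : ℝ)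
    (hcoeff : CoefficientsAssumption ν F b ρ K)
    (g : En n → ℝ) (hg : Continuous g) (hg_bdd : ∃ M, ∀ x, |g x| ≤ M)
    (c f φ : ℝ → En n → ℝ)
    (hc : ContinuousOn (fun p : ℝ × En n => c p.1 p.2) (Set.Icc 0 T ×ˢ Set.univ))
    (hf : ContinuousOn (fun p : ℝ × En n => f p.1 p.2) (Set.Icc 0 T ×ˢ Set.univ))
    (hφ : ContinuousOn (fun p : ℝ × En n => φ p.1 p.2) (Set.Icc 0 T ×ˢ Set.univ))
    (hc_bdd : ∃ M, ∀ t ∈ Set.Icc (0 : ℝ) T, ∀ x, |c t x| ≤ M)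
    (hcompat : ∀ x, φ T x ≤ g x)
    (hFlim : ∀ x : En n,
      Filter.Tendsto (F x) (nhdsWithin 0 {(0 : En n)}ᶜ) (nhds 0))
    (u v : ℝ → En n → ℝ)
    (hu : IsEvolSubsolution T ν F b c f φ g u)
    (hv : IsEvolSupersolution T ν F b c f φ g v) :
    ∀ t ∈ Set.Icc (0 : ℝ) T, ∀ x : En n, u t x ≤ v t x := by
  obtain ⟨hK, hFm, -, -, hFL, -, -, ⟨Cb, hCb⟩, ⟨Lb, hLb⟩⟩ := hcoeff
  have hF : ∀ x, Measurable (F x) := fun x => hFm.comp measurable_prodMk_left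
  have hb : ∀ x y, ‖b x - b y‖ ≤ Lb * ‖x - y‖ := fun x y => by
    simpa [dist_eq_norm] using hLb.dist_le_mul x y
  by_cases hq : Integrable (fun y => qf (F 0 y)) (ν.restrict {(0 : En n)}ᶜ)
  · exact comparison_of_integrable hT hu hv hF
      (fun x => integrable_qf_of_integrable_qf hK.le hF hFL hq) hK.le hb hCb hFL hc hf hφ hc_bdd
  · have hq' : ∀ x, ¬ Integrable (fun y => qf (F x y)) (ν.restrict {(0 : En n)}ᶜ) := fun x h =>
      hq (integrable_qf_of_integrable_qf hK.le hF hFL h)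
    exact comparison_of_integrable hT (hu.zero_measure hq') (hv.zero_measure hq') hF
      (fun x => by simp) hK.le hb hCb (fun x₁ x₂ => by simp) hc hf hφ hc_bdd

end
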